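/- In every 4-connected graph with δ ≥ α, the circumference satisfies c ≥ min{n, 4δ − κ − 4}. -/

import Mathlib

open SimpleGraph

variable {V : Type*}

/-- `G` is `k`-connected: more than `k` vertices and removing fewer than `k`
vertices leaves a connected graph. -/
def KConnected (G : SimpleGraph V) [Fintype V] (k : ℕ) : Prop :=
  k < Fintype.card V ∧
    ∀ S : Finset V, S.card < k → (G.induce ((↑S : Set V)ᶜ)).Connected

/-- vertex connectivity `κ`. -/
noncomputable def connectivity (G : SimpleGraph V) [Fintype V] : ℕ :=
  sSup {k | KConnected G k}

/-- independence number `α`. -/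
noncomputable def indepNumber (G : SimpleGraph V) [Fintype V] : ℕ :=
  sSup {k | ∃ s : Finset V, (∀ u ∈ s, ∀ v ∈ s, ¬ G.Adj u v) ∧ s.card = k}

/-- circumference `c`: length of a longest cycle. -/
noncomputable def circumference (G : SimpleGraph V) [Fintype V] : ℕ :=
  sSup {n | ∃ (v : V) (w : G.Walk v v), w.IsCycle ∧ w.length = n}

/-- `w` is a longest cycle of `G`. -/
def IsLongestCycle {G : SimpleGraph V} {v : V} (w : G.Walk v v) : Prop :=
  w.IsCycle ∧ ∀ (u : V) (w' : G.Walk u u), w'.IsCycle → w'.length ≤ w.length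

/-- dominating cycle: every edge has an endpoint on the cycle. -/
def IsDominatingCycle {G : SimpleGraph V} {v : V} (w : G.Walk v v) : Prop :=
  w.IsCycle ∧ ∀ x y, G.Adj x y → x ∈ w.support ∨ y ∈ w.support

/-- generalized cycle of length `n` with vertex set `W`: single vertices are
cycles of length 1, edges are cycles of length 2. -/
def ExtCycle (G : SimpleGraph V) (W : Set V) (n : ℕ) : Prop :=
  (n = 1 ∧ ∃ v : V, W = {v}) ∨
  (n = 2 ∧ ∃ u v : V, G.Adj u v ∧ W = {u, v}) ∨
  (3 ≤ n ∧ ∃ (v : V) (w : G.Walk v v), w.IsCycle ∧ w.length = n ∧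
      W = {x | x ∈ w.support})

/-- `p̄`: the length of a longest path in `G \ C`. -/
noncomputable def pathBar (G : SimpleGraph V) [Fintype V] {v : V} (w : G.Walk v v) : ℕ :=
  sSup {n | ∃ (a b : {x : V | x ∉ w.support})
      (p : (G.induce {x : V | x ∉ w.support}).Walk a b), p.IsPath ∧ p.length = n}

/-- `c̄`: the length of a longest (generalized) cycle in `G \ C`. -/
noncomputable def cycBar (G : SimpleGraph V) [Fintype V] {v : V} (w : G.Walk v v) : ℕ :=
  sSup {n | ∃ W, ExtCycle (G.induce {x : V | x ∉ w.support}) W n}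

/-- `CD_m`-cycle: every (generalized) cycle of length at least `m` meets `w`. -/
def IsCDCycle (G : SimpleGraph V) {v : V} (w : G.Walk v v) (m : ℕ) : Prop :=
  w.IsCycle ∧ ∀ (W : Set V) (n : ℕ), ExtCycle G W n → m ≤ n → ∃ x ∈ W, x ∈ w.support

/-!
Let `C` be a longest cycle missing some vertex and `H` a component of `G - C`. Two vertices of `C`
joined by a path with `m` edges through `H` are at distance at least `m` along `C`, since otherwise
`C` could be rerouted to a longer cycle. If `H` has a cut vertex, two of its end lobes are joined
by long paths and 4-connectedness gives each of them three attachments, so `|C| ≥ 4δ - 4`. If `H`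
has at least three vertices and no cut vertex, any two vertices of `H` are joined by a path about
as long as a degree in `H`, and 4-connectedness makes enough pairs of consecutive attachments have
distinct neighbours in `H`, so `|C| ≥ 4δ - 8`. Both suffice because `κ ≥ 4`.

If `|H| ≤ 2`, the successors on `C` of the attachments, together with a vertex of `H`, are
independent, so `α ≤ δ` forces `H` to be an edge whose ends have the same `δ - 1` neighbours on
`C`, and consecutive attachments are at distance at least three. Let `S` be a minimum separator. If
`|C| < 4 (δ - 1) - κ`, more than `κ` of the gaps equal three, so one of them has both its inner
vertices outside `S`, hence on the same side of the separation. The other side then contains no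
successor and no predecessor of an attachment, which leaves its vertices too few neighbours.
-/

/-! ## Paths and connectivity inside a vertex set -/

/-- Within the vertex set `W` there is a path from `x` to `y` with at least `m` edges. -/
def HasPathIn (G : SimpleGraph V) (W : Set V) (x y : V) (m : ℕ) : Prop :=
  ∃ p : G.Walk x y, p.IsPath ∧ (∀ v ∈ p.support, v ∈ W) ∧ m ≤ p.length

namespace HasPathIn

variable {G : SimpleGraph V} {W W₁ W₂ : Set V} {a b x y z : V} {m n : ℕ}

theorem refl (hx : x ∈ W) : HasPathIn G W x x 0 :=
  ⟨.nil, .nil, by simpa using hx, Nat.zero_le _⟩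

theorem mono (h : HasPathIn G W₁ x y m) (hW : W₁ ⊆ W₂) (hm : n ≤ m) : HasPathIn G W₂ x y n :=
  let ⟨p, hp, hpW, hpm⟩ := h
  ⟨p, hp, fun v hv => hW (hpW v hv), hm.trans hpm⟩

theorem symm (h : HasPathIn G W x y m) : HasPathIn G W y x m :=
  let ⟨p, hp, hpW, hpm⟩ := h
  ⟨p.reverse, hp.reverse, by simpa using hpW, by simpa using hpm⟩

theorem left_mem (h : HasPathIn G W x y m) : x ∈ W :=
  let ⟨p, _, hpW, _⟩ := h
  hpW x p.start_mem_support

theorem right_mem (h : HasPathIn G W x y m) : y ∈ W :=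
  h.symm.left_mem

theorem cons (h : HasPathIn G W y z m) (hx : x ∉ W) (hxy : G.Adj x y) :
    HasPathIn G (insert x W) x z (m + 1) :=
  let ⟨p, hp, hpW, hpm⟩ := h
  ⟨p.cons hxy, hp.cons fun hxp => hx (hpW x hxp), fun v hv => by
    rw [Walk.support_cons, List.mem_cons] at hv
    exact hv.imp_right (hpW v), by simpa using hpm⟩

theorem of_adj (h : G.Adj x y) : HasPathIn G {x, y} x y 1 :=
  (refl (Set.mem_singleton y)).cons (by simpa using h.ne) h

theorem trans (h₁ : HasPathIn G W₁ x b m) (h₂ : HasPathIn G W₂ b y n) (hW : W₁ ∩ W₂ ⊆ {b}) :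
    HasPathIn G (W₁ ∪ W₂) x y (m + n) := by
  obtain ⟨p, hp, hpW, hpm⟩ := h₁
  obtain ⟨q, hq, hqW, hqn⟩ := h₂
  refine ⟨p.append q, .mk' ?_, fun v hv => ?_, by simpa using add_le_add hpm hqn⟩
  · have hq' := hq.support_nodup
    rw [← Walk.cons_tail_support, List.nodup_cons] at hq'
    rw [Walk.support_append, List.nodup_append]
    refine ⟨hp.support_nodup, hq'.2, ?_⟩
    rintro u hu _ hv rfl
    obtain rfl : u = b := hW ⟨hpW u hu, hqW u (List.mem_of_mem_tail hv)⟩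
    exact hq'.1 hv
  · exact (Walk.mem_support_append_iff p q).1 hv |>.imp (hpW v) (hqW v)

theorem append (h₁ : HasPathIn G W₁ x a m) (h₂ : HasPathIn G W₂ b y n) (hab : G.Adj a b)
    (hW : Disjoint W₁ W₂) : HasPathIn G (W₁ ∪ W₂) x y (m + 1 + n) := by
  rw [Set.disjoint_left] at hW
  have ha := h₁.right_mem
  refine (h₁.trans (h₂.cons (hW ha) hab) ?_).mono ?_ (by omega)
  · rintro v ⟨hv, rfl | hv'⟩
    · rfl
    · exact absurd hv' (hW hv)
  · exact Set.union_subset Set.subset_union_left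
      (Set.insert_subset (.inl ha) Set.subset_union_right)

end HasPathIn

section Connectivity

variable {G : SimpleGraph V} {k : ℕ}

theorem preconnected_induce_iff_exists_adj {W : Set V} : (G.induce W).Preconnected ↔
    ∀ A ⊂ W, A.Nonempty → ∃ u ∈ A, ∃ v ∈ W \ A, G.Adj u v := by
  refine ⟨fun h A hA ⟨a, ha⟩ => ?_, fun h x y => ?_⟩
  · obtain ⟨b, hbW, hbA⟩ := Set.exists_of_ssubset hA
    obtain ⟨p⟩ := h ⟨a, hA.subset ha⟩ ⟨b, hbW⟩
    obtain ⟨d, -, hd₁, hd₂⟩ := p.exists_boundary_dart (Subtype.val ⁻¹' A) ha hbA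
    exact ⟨_, hd₁, _, ⟨d.snd.2, hd₂⟩, d.adj⟩
  · by_contra hxy
    let A : Set V := {v | ∃ hv : v ∈ W, (G.induce W).Reachable x ⟨v, hv⟩}
    obtain ⟨u, ⟨huW, hu⟩, v, ⟨hvW, hvA⟩, huv⟩ := h A
      ⟨fun v hv => hv.1, fun hWA => hxy (hWA y.2).2⟩ ⟨x, x.2, .rfl⟩
    exact hvA ⟨hvW, hu.trans (Adj.reachable (G := G.induce W) (u := ⟨u, huW⟩) huv)⟩

theorem exists_adj_of_preconnected {W A : Finset V} (hW : (G.induce (W : Set V)).Preconnected)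
    (hA : A ⊂ W) (hne : A.Nonempty) : ∃ u ∈ A, ∃ v ∈ W, v ∉ A ∧ G.Adj u v := by
  obtain ⟨u, hu, v, ⟨hv, hvA⟩, huv⟩ :=
    preconnected_induce_iff_exists_adj.1 hW A (Finset.coe_ssubset.2 hA) (Finset.coe_nonempty.2 hne)
  exact ⟨u, hu, v, hv, hvA, huv⟩

theorem hasPathIn_of_preconnected {W : Set V} {x y : V} (hW : (G.induce W).Preconnected)
    (hx : x ∈ W) (hy : y ∈ W) : HasPathIn G W x y 0 := by
  obtain ⟨p, hp⟩ := (hW ⟨x, hx⟩ ⟨y, hy⟩).exists_isPath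
  refine ⟨p.map (Embedding.induce W).toHom, ?_, fun v hv => ?_, Nat.zero_le _⟩
  · exact hp.map (Embedding.induce (G := G) W).injective
  · obtain ⟨u, -, rfl⟩ := List.mem_map.1 ((Walk.support_map _ p) ▸ hv)
    exact u.2

theorem HasPathIn.one_le {W : Set V} {x y : V} {m : ℕ} (h : HasPathIn G W x y m) (hxy : x ≠ y) :
    HasPathIn G W x y 1 :=
  let ⟨p, hp, hpW, _⟩ := h
  ⟨p, hp, hpW, Nat.one_le_iff_ne_zero.2 fun h0 => hxy (Walk.eq_of_length_eq_zero h0)⟩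

theorem KConnected.exists_adj [Fintype V] (h : KConnected G k) {S : Finset V} {X : Set V}
    (hS : S.card < k) {u v : V} (huX : u ∈ X) (huS : u ∉ S) (hvX : v ∉ X) (hvS : v ∉ S) :
    ∃ a ∈ X, a ∉ S ∧ ∃ b ∉ X, b ∉ S ∧ G.Adj a b := by
  obtain ⟨a, ⟨haX, haS⟩, b, ⟨hbS, hb⟩, hab⟩ :=
    preconnected_induce_iff_exists_adj.1 (h.2 S hS).preconnected
    (X \ S) ⟨fun w hw => hw.2, fun hle => hvX (hle hvS).1⟩ ⟨u, huX, huS⟩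
  exact ⟨a, haX, haS, b, fun hbX => hb ⟨hbX, hbS⟩, hbS, hab⟩

end Connectivity

/-! ## Long paths between two vertices -/

section LongPaths

variable {G : SimpleGraph V} {W A X : Finset V} {b x x₀ z : V}

/-- The subgraph induced by `W` stays connected when any one of its vertices is deleted. -/
def NoCutVertex (G : SimpleGraph V) (W : Finset V) : Prop :=
  ∀ b ∈ W, (G.induce ((W : Set V) \ {b})).Preconnected

/-- `A` is a nonempty union of connected components of `W - b`, where `b ∈ W`. -/
structure IsLobe (G : SimpleGraph V) (W : Finset V) (b : V) (A : Finset V) : Prop where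
  nonempty : A.Nonempty
  subset : A ⊆ W
  mem : b ∈ W
  notMem : b ∉ A
  closed : ∀ u ∈ A, ∀ v ∈ W, G.Adj u v → v ∈ A ∨ v = b

theorem NoCutVertex.exists_adj (h : NoCutVertex G W) (hne : A.Nonempty) (hAW : A ⊆ W)
    (hb : b ∈ W) (hbA : b ∉ A) (hx : x ∈ W) (hxb : x ≠ b) (hxA : x ∉ A) :
    ∃ u ∈ A, ∃ v ∈ W, v ≠ b ∧ v ∉ A ∧ G.Adj u v := by
  obtain ⟨u, hu, v, ⟨⟨hv, hvb⟩, hvA⟩, huv⟩ := preconnected_induce_iff_exists_adj.1 (h b hb) A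
    ⟨fun a ha => ⟨hAW ha, fun hab => hbA (hab ▸ ha)⟩, fun hle => hxA (hle ⟨hx, hxb⟩)⟩ hne
  exact ⟨u, hu, v, hv, hvb, hvA, huv⟩

theorem IsLobe.preconnected_insert (hA : IsLobe G W b A)
    (hW : (G.induce (W : Set V)).Preconnected) :
    (G.induce (insert b (A : Set V))).Preconnected := by
  have hle : insert b (A : Set V) ⊆ W := Set.insert_subset hA.mem hA.subset
  refine preconnected_induce_iff_exists_adj.2 fun B hB hne => ?_
  by_cases hbB : b ∈ B
  · obtain ⟨w, hwA, hwB⟩ := Set.exists_of_ssubset hB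
    have hwA : w ∈ A := hwA.resolve_left fun h => hwB (h ▸ hbB)
    obtain ⟨u, hu, v, ⟨hvW, hv⟩, huv⟩ := preconnected_induce_iff_exists_adj.1 hW (B ∪ (W \ A))
      ⟨Set.union_subset (hB.subset.trans hle) Set.sdiff_subset,
        fun h => (h (hA.subset hwA)).elim hwB fun h' => h'.2 hwA⟩ (hne.mono Set.subset_union_left)
    have hvA : v ∈ A := by_contra fun h => hv (.inr ⟨hvW, h⟩)
    refine ⟨u, ?_, v, ⟨.inr hvA, fun h => hv (.inl h)⟩, huv⟩
    rcases hu with hu | ⟨huW, huA⟩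
    · exact hu
    · exact ((hA.closed v hvA u huW huv.symm).resolve_left huA) ▸ hbB
  · have hBA : B ⊆ A := fun a ha => (hB.subset ha).resolve_left fun h => hbB (h ▸ ha)
    obtain ⟨u, hu, v, ⟨hvW, hvB⟩, huv⟩ := preconnected_induce_iff_exists_adj.1 hW B
      ⟨hB.subset.trans hle, fun h => hbB (h hA.mem)⟩ hne
    exact ⟨u, hu, v, ⟨(hA.closed u (hBA hu) v hvW huv).symm, hvB⟩, huv⟩

/-- The number of neighbours of `x` in `W`. -/
def degIn (G : SimpleGraph V) [DecidableRel G.Adj] (W : Finset V) (x : V) : ℕ :=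
  (W.filter fun v => G.Adj x v).card

theorem degIn_mono [DecidableRel G.Adj] {W₁ W₂ : Finset V} (h : W₁ ⊆ W₂) (x : V) :
    degIn G W₁ x ≤ degIn G W₂ x :=
  Finset.card_le_card (Finset.filter_subset_filter _ h)

theorem one_le_degIn [DecidableRel G.Adj] (hW : (G.induce (W : Set V)).Preconnected)
    (hx : x ∈ W) (hz : z ∈ W) (hzx : z ≠ x) : 1 ≤ degIn G W x := by
  obtain ⟨u, hu, v, hv, -, huv⟩ := exists_adj_of_preconnected hW (Finset.ssubset_iff_subset_ne.2
    ⟨Finset.singleton_subset_iff.2 hx, fun h => hzx (Finset.mem_singleton.1 (h ▸ hz))⟩)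
    (Finset.singleton_nonempty x)
  rw [Finset.mem_singleton] at hu
  exact Finset.card_pos.2 ⟨v, Finset.mem_filter.2 ⟨hv, hu ▸ huv⟩⟩

theorem degIn_lt_card [DecidableRel G.Adj] (hx : x ∈ W) : degIn G W x < W.card :=
  Finset.card_lt_card <| Finset.filter_ssubset.2 ⟨x, hx, G.irrefl⟩

section DecidableEq

variable [DecidableEq V]

theorem IsLobe.compl (hA : IsLobe G W b A) (hne : (W.erase b \ A).Nonempty) :
    IsLobe G W b (W.erase b \ A) where
  nonempty := hne
  subset := Finset.sdiff_subset.trans (Finset.erase_subset _ _)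
  mem := hA.mem
  notMem := by simp
  closed u hu v hv huv := by
    rw [Finset.mem_sdiff, Finset.mem_erase] at hu ⊢
    by_contra h
    exact hu.2 ((hA.closed v (by tauto) u hu.1.2 huv.symm).resolve_right hu.1.1)

theorem IsLobe.of_insert (hA : IsLobe G W b A) {b' : V} (hX : IsLobe G (insert b A) b' X)
    (hbX : b ∉ X) : IsLobe G W b' X where
  nonempty := hX.nonempty
  subset := hX.subset.trans (Finset.insert_subset hA.mem hA.subset)
  mem := Finset.insert_subset hA.mem hA.subset hX.mem
  notMem := hX.notMem
  closed u hu v hv huv := by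
    have huA := (Finset.mem_insert.1 (hX.subset hu)).resolve_left fun h => hbX (h ▸ hu)
    exact hX.closed u hu v (Finset.mem_insert.2 (hA.closed u huA v hv huv).symm) huv

theorem exists_isLobe (hb : b ∈ W) (h : ¬ (G.induce ((W : Set V) \ {b})).Preconnected) :
    ∃ A, IsLobe G W b A ∧ IsLobe G W b (W.erase b \ A) := by
  rw [preconnected_induce_iff_exists_adj] at h
  push Not at h
  obtain ⟨A, hA, hne, hcl⟩ := h
  lift A to Finset V using W.finite_toSet.subset (hA.subset.trans Set.sdiff_subset)
  have hbA : b ∉ A := fun h => (hA.subset h).2 rfl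
  have hlobe : IsLobe G W b A :=
    { nonempty := Finset.coe_nonempty.1 hne
      subset := fun a ha => (hA.subset ha).1
      mem := hb
      notMem := hbA
      closed := fun u hu v hv huv => by
        by_contra h
        rw [not_or] at h
        exact hcl u hu v ⟨⟨hv, h.2⟩, h.1⟩ huv }
  refine ⟨A, hlobe, hlobe.compl ?_⟩
  obtain ⟨v, ⟨hvW, hvb⟩, hvA⟩ := Set.exists_of_ssubset hA
  exact ⟨v, Finset.mem_sdiff.2 ⟨Finset.mem_erase.2 ⟨hvb, hvW⟩, hvA⟩⟩

theorem exists_isLobe_notMem (hb : b ∈ W) (h : ¬ (G.induce ((W : Set V) \ {b})).Preconnected)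
    (z : V) : ∃ A, IsLobe G W b A ∧ IsLobe G W b (W.erase b \ A) ∧ z ∉ A := by
  obtain ⟨A, hA, hA'⟩ := exists_isLobe hb h
  by_cases hz : z ∈ A
  · refine ⟨W.erase b \ A, hA', ?_, by simp [hz]⟩
    rwa [Finset.sdiff_sdiff_eq_self fun a ha =>
      Finset.mem_erase.2 ⟨ne_of_mem_of_not_mem ha hA.notMem, hA.subset ha⟩]
  · exact ⟨A, hA, hA', hz⟩

variable [DecidableRel G.Adj]

theorem degIn_le_degIn_erase_add_one (W : Finset V) (x u : V) :
    degIn G W u ≤ degIn G (W.erase x) u + 1 := by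
  unfold degIn
  rw [Finset.filter_erase]
  have := Finset.pred_card_le_card_erase (s := W.filter fun v => G.Adj u v) (a := x)
  omega

/-- A lobe `X` of `W` at `b`, missing `z`, from each of whose vertices there is a path to `z`
in `W` at least as long as the degree in `W` of the fixed vertex `x₀ ∈ X`. -/
structure LongPathLobe (G : SimpleGraph V) [DecidableRel G.Adj] (W : Finset V) (z : V)
    (X : Finset V) (b x₀ : V) : Prop extends IsLobe G W b X where
  target_notMem : z ∉ X
  base_mem : x₀ ∈ X
  path : ∀ x ∈ X, HasPathIn G W x z (degIn G W x₀)

theorem NoCutVertex.hasPathIn_of_longPathLobe (hW : NoCutVertex G W) (hx : x ∈ W)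
    (hX : LongPathLobe G (W.erase x) z X b x₀) : HasPathIn G W x z (degIn G W x₀) := by
  obtain ⟨hbx, hbW⟩ := Finset.mem_erase.1 hX.mem
  have hxX : x ∉ X := fun h => Finset.notMem_erase x W (hX.subset h)
  obtain ⟨u, hu, v, hv, hvb, hvX, huv⟩ := hW.exists_adj hX.nonempty
    (hX.subset.trans (Finset.erase_subset _ _)) hbW hX.notMem hx hbx.symm hxX
  obtain rfl : v = x := by
    by_contra hne
    exact (hX.closed u hu v (Finset.mem_erase.2 ⟨hne, hv⟩) huv).elim hvX hvb
  refine ((hX.path u hu).cons (by simp) huv.symm).mono ?_ (degIn_le_degIn_erase_add_one W v x₀)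
  rw [← Finset.coe_insert, Finset.insert_erase hx]

theorem exists_longPathLobe_erase (hz : z ∈ W) (hne : (W.erase z).Nonempty)
    (h : ∀ x ∈ W.erase z, ∃ y ∈ W.erase z, HasPathIn G W x z (degIn G W y)) :
    ∃ x₀, LongPathLobe G W z (W.erase z) z x₀ := by
  obtain ⟨x₀, hx₀, hmin⟩ := (W.erase z).exists_min_image (degIn G W) hne
  refine ⟨x₀, ⟨hne, Finset.erase_subset _ _, hz, by simp, fun u _ v hv _ => ?_⟩, by simp, hx₀,
    fun x hx => ?_⟩
  · by_cases hvz : v = z <;> simp [hvz, hv]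
  · obtain ⟨y, hy, hxy⟩ := h x hx
    exact hxy.mono subset_rfl (hmin y hy)

theorem IsLobe.degIn_insert (hA : IsLobe G W b A) {u : V} (hu : u ∈ A) :
    degIn G (insert b A) u = degIn G W u := by
  refine le_antisymm (degIn_mono (Finset.insert_subset hA.mem hA.subset) u)
    (Finset.card_le_card fun v hv => ?_)
  rw [Finset.mem_filter] at hv ⊢
  exact ⟨Finset.mem_insert.2 (hA.closed u hu v hv.1 hv.2).symm, hv.2⟩

theorem LongPathLobe.subset_of_insert {b' : V} (hX : LongPathLobe G (insert b A) b X b' x₀) :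
    X ⊆ A :=
  (Finset.subset_insert_iff_of_notMem hX.target_notMem).1 hX.subset

theorem IsLobe.longPathLobe (hA : IsLobe G W b A) {b' : V}
    (hX : LongPathLobe G (insert b A) b X b' x₀) (hzA : z ∉ A)
    (hbz : HasPathIn G (insert b (W.erase b \ A) : Finset V) b z 0) :
    LongPathLobe G W z X b' x₀ where
  toIsLobe := hA.of_insert hX.toIsLobe hX.target_notMem
  target_notMem h := hzA (hX.subset_of_insert h)
  base_mem := hX.base_mem
  path x hx := by
    rw [← hA.degIn_insert (hX.subset_of_insert hX.base_mem)]
    refine ((hX.path x hx).trans hbz fun v hv => ?_).mono ?_ le_rfl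
    · simp only [Set.mem_inter_iff, Finset.mem_coe, Finset.mem_insert, Finset.mem_sdiff] at hv
      rw [Set.mem_singleton_iff]
      tauto
    · rw [← Finset.coe_union, Finset.coe_subset]
      exact Finset.union_subset (Finset.insert_subset hA.mem hA.subset) (Finset.insert_subset
        hA.mem (Finset.sdiff_subset.trans (Finset.erase_subset _ _)))

end DecidableEq

variable [DecidableRel G.Adj]

theorem exists_longPathLobe (hW : (G.induce (W : Set V)).Preconnected) (hz : z ∈ W)
    (hcard : 2 ≤ W.card) : ∃ X b x₀, LongPathLobe G W z X b x₀ := by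
  classical
  induction hn : W.card using Nat.strong_induction_on generalizing W z with
  | _ n ih =>
  subst hn
  by_cases hcut : NoCutVertex G W
  · obtain ⟨x₀, hx₀⟩ := exists_longPathLobe_erase (G := G) hz
      (by rw [← Finset.card_pos, Finset.card_erase_of_mem hz]; omega) fun x hx => by
        obtain ⟨hxz, hxW⟩ := Finset.mem_erase.1 hx
        rcases hcard.eq_or_lt with h2 | h3
        · have := degIn_lt_card (G := G) hxW
          exact ⟨x, hx, ((hasPathIn_of_preconnected hW hxW hz).one_le hxz).mono subset_rfl
            (by omega)⟩
        · obtain ⟨X, b, y, hX⟩ := ih _ (Finset.card_erase_lt_of_mem hxW)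
            (by rw [Finset.coe_erase]; exact hcut x hxW) (Finset.mem_erase.2 ⟨hxz.symm, hz⟩)
            (by rw [Finset.card_erase_of_mem hxW]; omega) rfl
          exact ⟨y, Finset.mem_erase.2 ⟨fun h => hX.target_notMem (h ▸ hX.base_mem),
            Finset.mem_of_mem_erase (hX.subset hX.base_mem)⟩,
            hcut.hasPathIn_of_longPathLobe hxW hX⟩
    exact ⟨_, _, x₀, hx₀⟩
  · obtain ⟨b, hb, hnc⟩ : ∃ b ∈ W, ¬ (G.induce ((W : Set V) \ {b})).Preconnected := by
      simpa [NoCutVertex] using hcut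
    obtain ⟨A, hA, hA', hzA⟩ := exists_isLobe_notMem hb hnc z
    have hlt : (insert b A).card < W.card := by
      obtain ⟨a, ha⟩ := hA'.nonempty
      rw [Finset.mem_sdiff, Finset.mem_erase] at ha
      refine Finset.card_lt_card ⟨Finset.insert_subset hb hA.subset, fun h => ?_⟩
      exact (Finset.mem_insert.1 (h ha.1.2)).elim ha.1.1 ha.2
    obtain ⟨X, b', x₀, hX⟩ := ih _ hlt (by
        rw [Finset.coe_insert]; exact hA.preconnected_insert hW)
      (Finset.mem_insert_self b A)
      (by rw [Finset.card_insert_of_notMem hA.notMem]; have := hA.nonempty.card_pos; omega) rfl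
    refine ⟨X, b', x₀, hA.longPathLobe hX hzA <|
      hasPathIn_of_preconnected (by
        rw [Finset.coe_insert]; exact hA'.preconnected_insert hW) (by simp) ?_⟩
    rw [Finset.mem_coe, Finset.mem_insert, Finset.mem_sdiff, Finset.mem_erase]
    tauto

theorem IsLobe.exists_long_paths [DecidableEq V] (hA : IsLobe G W b A)
    (hW : (G.induce (W : Set V)).Preconnected) : ∃ X ⊆ A, ∃ b' ∈ insert b A, ∃ x₀ ∈ X,
      IsLobe G W b' X ∧ ∀ x ∈ X, HasPathIn G (insert b A : Finset V) x b (degIn G W x₀) := by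
  obtain ⟨X, b', x₀, hX⟩ := exists_longPathLobe (G := G) (W := insert b A)
    (by rw [Finset.coe_insert]; exact hA.preconnected_insert hW) (Finset.mem_insert_self b A)
    (by rw [Finset.card_insert_of_notMem hA.notMem]; have := hA.nonempty.card_pos; omega)
  refine ⟨X, hX.subset_of_insert, b', hX.mem, x₀, hX.base_mem,
    hA.of_insert hX.toIsLobe hX.target_notMem, fun x hx => ?_⟩
  rw [← hA.degIn_insert (hX.subset_of_insert hX.base_mem)]
  exact hX.path x hx

theorem NoCutVertex.exists_long_path (hW : NoCutVertex G W) (hcard : 3 ≤ W.card)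
    (hx : x ∈ W) (hz : z ∈ W) (hxz : x ≠ z) :
    ∃ x₀ ∈ W, x₀ ≠ x ∧ x₀ ≠ z ∧ HasPathIn G W x z (degIn G W x₀) := by
  classical
  obtain ⟨X, b, x₀, hX⟩ := exists_longPathLobe (W := W.erase x)
    (by rw [Finset.coe_erase]; exact hW x hx) (Finset.mem_erase.2 ⟨hxz.symm, hz⟩)
    (by rw [Finset.card_erase_of_mem hx]; omega)
  obtain ⟨hx₀x, hx₀W⟩ := Finset.mem_erase.1 (hX.subset hX.base_mem)
  exact ⟨x₀, hx₀W, hx₀x, fun h => hX.target_notMem (h ▸ hX.base_mem),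
    hW.hasPathIn_of_longPathLobe hx hX⟩

end LongPaths

/-! ## Gaps of a set of residues in cyclic order -/

section CyclicGaps

variable {c : ℕ}

theorem exists_eq_add_natCast_of_ne [NeZero c] {i j : ZMod c} (h : i ≠ j) :
    ∃ d : ℕ, 1 ≤ d ∧ d < c ∧ j = i + d := by
  refine ⟨(j - i).val, ?_, ZMod.val_lt _, by simp⟩
  rw [Nat.one_le_iff_ne_zero, Ne, ZMod.val_eq_zero, sub_eq_zero]
  exact h.symm

theorem sum_le_of_forall_add_notMem [NeZero c] (M : Finset (ZMod c)) (w : ZMod c → ℕ)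
    (hw : ∀ i ∈ M, ∀ t : ℕ, 1 ≤ t → t < w i → i + t ∉ M) : ∑ i ∈ M, w i ≤ c := by
  have hle : ∀ i ∈ M, ∀ j ∈ M, ∀ s t : ℕ, t < w j → s ≤ t → i + s = j + t → s = t := by
    intro i hi j hj s t ht hst h
    by_contra hne
    refine hw j hj (t - s) (by omega) (by omega) ?_
    have : j + ((t - s : ℕ) : ZMod c) = i := by
      rw [Nat.cast_sub hst, ← add_sub_assoc, ← h, add_sub_cancel_right]
    rwa [this]
  have hinj : Set.InjOn (fun p : (_ : ZMod c) × ℕ => p.1 + (p.2 : ZMod c))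
      (M.sigma fun i => Finset.range (w i)) := by
    rintro ⟨i, s⟩ hi ⟨j, t⟩ hj h
    simp only [Finset.coe_sigma, Set.mem_sigma_iff, Finset.mem_coe, Finset.mem_range] at hi hj h
    obtain rfl : s = t := by
      rcases le_total s t with hst | hst
      · exact hle i hi.1 j hj.1 s t hj.2 hst h
      · exact (hle j hj.1 i hi.1 t s hi.2 hst h.symm).symm
    simpa using h
  have := Finset.card_le_card_of_injOn (t := Finset.univ) _
    (fun _ _ => Finset.mem_coe.2 (Finset.mem_univ _)) hinj
  simpa [ZMod.card] using this

/-- The distance from `i` to the next element of `M` in the cyclic order of `ZMod c`; it is `c`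
when `i` is the only element of `M`, and the junk value `0` when `M` is empty. -/
noncomputable def cyclicGap (M : Finset (ZMod c)) (i : ZMod c) : ℕ :=
  sInf {t : ℕ | 1 ≤ t ∧ i + t ∈ M}

/-- The element of `M` following `i` in the cyclic order of `ZMod c`. -/
noncomputable def cyclicNext (M : Finset (ZMod c)) (i : ZMod c) : ZMod c :=
  i + (cyclicGap M i : ℕ)

variable {M N₁ N₂ : Finset (ZMod c)} {i : ZMod c}

theorem cyclicGap_le {t : ℕ} (ht : 1 ≤ t) (h : i + t ∈ M) : cyclicGap M i ≤ t :=
  Nat.sInf_le ⟨ht, h⟩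

/-- The elements of `N₁ ∪ N₂` at which one can pass from one set to the other: one of the two sets
contains the element and the other one contains its cyclic successor in `N₁ ∪ N₂`. -/
noncomputable def transitions (N₁ N₂ : Finset (ZMod c)) : Finset (ZMod c) :=
  (N₁ ∪ N₂).filter fun i =>
    (i ∈ N₁ ∧ cyclicNext (N₁ ∪ N₂) i ∈ N₂) ∨ (i ∈ N₂ ∧ cyclicNext (N₁ ∪ N₂) i ∈ N₁)

theorem transitions_subset (N₁ N₂ : Finset (ZMod c)) : transitions N₁ N₂ ⊆ N₁ ∪ N₂ :=
  Finset.filter_subset _ _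

variable [NeZero c]

theorem one_le_cyclicGap (hi : i ∈ M) : 1 ≤ cyclicGap M i :=
  le_csInf ⟨c, NeZero.one_le, by simpa using hi⟩ fun _ ht => ht.1

theorem cyclicNext_mem (hi : i ∈ M) : cyclicNext M i ∈ M :=
  (Nat.sInf_mem (s := {t : ℕ | 1 ≤ t ∧ i + t ∈ M}) ⟨c, NeZero.one_le, by simpa using hi⟩).2

theorem cyclicGap_lt (hM : 2 ≤ M.card) : cyclicGap M i < c := by
  obtain ⟨j, hj, hne⟩ := Finset.exists_mem_ne hM i
  obtain ⟨d, hd, hdc, rfl⟩ := exists_eq_add_natCast_of_ne hne.symm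
  exact (cyclicGap_le hd hj).trans_lt hdc

theorem cyclicNext_ne (hi : i ∈ M) (hM : 2 ≤ M.card) : cyclicNext M i ≠ i := by
  intro h
  have h0 : ((cyclicGap M i : ℕ) : ZMod c) = 0 := by simpa [cyclicNext] using h
  rw [ZMod.natCast_eq_zero_iff] at h0
  exact absurd (Nat.le_of_dvd (one_le_cyclicGap hi) h0) (not_le.2 (cyclicGap_lt hM))

theorem sum_cyclicGap_le (M : Finset (ZMod c)) : ∑ i ∈ M, cyclicGap M i ≤ c :=
  sum_le_of_forall_add_notMem M _ fun _ _ _ ht hlt h =>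
    absurd (cyclicGap_le ht h) (not_le.2 hlt)

theorem eq_of_cyclicNext_mem {B : Finset (ZMod c)} (hB : B ⊆ M) (hne : B.Nonempty)
    (hcl : ∀ i ∈ B, cyclicNext M i ∈ B) : B = M := by
  refine Finset.Subset.antisymm hB fun m hm => ?_
  obtain ⟨i, hi⟩ := hne
  have key : ∀ t : ℕ, ∀ i ∈ B, i + t ∈ M → i + t ∈ B := by
    intro t
    induction t using Nat.strong_induction_on with
    | _ t ih =>
    intro i hi h
    rcases Nat.eq_zero_or_pos t with rfl | ht
    · simpa using hi
    · have hg := cyclicGap_le ht h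
      have e : cyclicNext M i + ((t - cyclicGap M i : ℕ) : ZMod c) = i + t := by
        rw [cyclicNext, Nat.cast_sub hg]; ring
      have := ih (t - cyclicGap M i) (by have := one_le_cyclicGap (hB hi); omega) _ (hcl i hi)
      rw [e] at this
      exact this h
  have e : m = i + ((m - i).val : ZMod c) := by simp
  rw [e] at hm ⊢
  exact key _ i hi hm

theorem exists_cyclicNext_mem (h₁ : N₁.Nonempty) (h₂ : N₂.Nonempty) :
    ∃ i ∈ N₁, cyclicNext (N₁ ∪ N₂) i ∈ N₂ := by
  by_contra! hcon
  have hN : N₁ = N₁ ∪ N₂ := eq_of_cyclicNext_mem Finset.subset_union_left h₁ fun i hi =>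
    (Finset.mem_union.1 (cyclicNext_mem (Finset.mem_union_left _ hi))).resolve_right (hcon i hi)
  obtain ⟨i, hi⟩ := h₁
  have hd : (N₁ ∪ N₂) \ N₂ = N₁ ∪ N₂ := by
    refine eq_of_cyclicNext_mem Finset.sdiff_subset ⟨cyclicNext (N₁ ∪ N₂) i, ?_⟩ fun j hj => ?_
    · exact Finset.mem_sdiff.2 ⟨cyclicNext_mem (Finset.mem_union_left _ hi), hcon i hi⟩
    · have hj := (Finset.mem_sdiff.1 hj).1
      exact Finset.mem_sdiff.2 ⟨cyclicNext_mem hj, hcon j (hN.symm ▸ hj)⟩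
  obtain ⟨j, hj⟩ := h₂
  have : j ∈ (N₁ ∪ N₂) \ N₂ := hd.symm ▸ Finset.mem_union_right _ hj
  exact (Finset.mem_sdiff.1 this).2 hj

theorem two_le_card_transitions (h₁ : N₁.Nonempty) (h₂ : N₂.Nonempty)
    (hM : 2 ≤ (N₁ ∪ N₂).card) : 2 ≤ (transitions N₁ N₂).card := by
  obtain ⟨i, hi, hi'⟩ := exists_cyclicNext_mem h₁ h₂
  obtain ⟨j, hj, hj'⟩ := exists_cyclicNext_mem h₂ h₁
  rw [Finset.union_comm] at hj'
  have hiM := Finset.mem_union_left N₂ hi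
  have hiT : i ∈ transitions N₁ N₂ := Finset.mem_filter.2 ⟨hiM, .inl ⟨hi, hi'⟩⟩
  have hjT : j ∈ transitions N₁ N₂ :=
    Finset.mem_filter.2 ⟨Finset.mem_union_right _ hj, .inr ⟨hj, hj'⟩⟩
  refine Finset.one_lt_card.2 ?_
  by_cases hij : i = j
  · subst hij
    have hn := cyclicNext_mem hiM
    have hnn := cyclicNext_mem hn
    refine ⟨_, hiT, cyclicNext (N₁ ∪ N₂) i, Finset.mem_filter.2 ⟨hn, ?_⟩,
      (cyclicNext_ne hiM hM).symm⟩
    rw [Finset.mem_union] at hnn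
    tauto
  · exact ⟨i, hiT, j, hjT, hij⟩

theorem card_add_card_le_transitions (N₁ N₂ : Finset (ZMod c)) :
    N₁.card + N₂.card ≤ (transitions N₁ N₂).card + (N₁ ∪ N₂).card := by
  have : N₁ ∩ N₂ ⊆ transitions N₁ N₂ := fun i hi => by
    rw [Finset.mem_inter] at hi
    have h := Finset.mem_union_left N₂ hi.1
    have hn := cyclicNext_mem h
    refine Finset.mem_filter.2 ⟨h, ?_⟩
    rw [Finset.mem_union] at hn
    tauto
  have h1 := Finset.card_le_card this
  have h2 := Finset.card_union_add_card_inter N₁ N₂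
  omega

end CyclicGaps

/-! ## Rerouting a longest cycle -/

/-- `f` lists the vertices of a longest cycle of `G`, of length `c`, in cyclic order. -/
structure LongestCycleMap (G : SimpleGraph V) {c : ℕ} (f : ZMod c → V) : Prop where
  three_le : 3 ≤ c
  injective : Function.Injective f
  adj : ∀ i, G.Adj (f i) (f (i + 1))
  longest : ∀ (u : V) (w : G.Walk u u), w.IsCycle → w.length ≤ c

/-- The set of the vertices `f (i + a), …, f (i + b)`. -/
def arc {c : ℕ} (f : ZMod c → V) (i : ZMod c) (a b : ℕ) : Set V :=
  (fun t : ℕ => f (i + t)) '' Set.Icc a b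

theorem arc_subset_range {c : ℕ} (f : ZMod c → V) (i : ZMod c) (a b : ℕ) :
    arc f i a b ⊆ Set.range f :=
  fun _ ⟨t, _, ht⟩ => ⟨i + t, ht⟩

theorem disjoint_arc_of_forall_notMem {c : ℕ} {f : ZMod c → V} {W : Set V} (hW : ∀ j, f j ∉ W)
    (i : ZMod c) (a b : ℕ) : Disjoint W (arc f i a b) :=
  (Set.disjoint_right.2 (Set.forall_mem_range.2 hW)).mono_right (arc_subset_range f i a b)

namespace LongestCycleMap

variable {G : SimpleGraph V} {c : ℕ} {f : ZMod c → V} {i : ZMod c} {W Q : Set V} {x y : V}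
  {m n : ℕ}

theorem neZero (hf : LongestCycleMap G f) : NeZero c :=
  ⟨by have := hf.three_le; omega⟩

theorem reverse (hf : LongestCycleMap G f) : LongestCycleMap G fun i => f (-i) := by
  refine ⟨hf.three_le, fun i j h => neg_injective (hf.injective h), fun i => ?_, hf.longest⟩
  have := (hf.adj (-(i + 1))).symm
  rwa [show -(i + 1) + 1 = -i by ring] at this

theorem length_add_one_le (hf : LongestCycleMap G f) (h : HasPathIn G W x y m) (hm : 2 ≤ m)
    (hyx : G.Adj y x) : m + 1 ≤ c := by
  obtain ⟨p, hp, -, hpm⟩ := h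
  have hcycle : (p.cons hyx).IsCycle := (Walk.cons_isCycle_iff p hyx).2 ⟨hp, fun he => by
    have := hp.length_eq_one_of_mem_edges (Sym2.eq_swap ▸ he)
    omega⟩
  have := hf.longest y _ hcycle
  rw [Walk.length_cons] at this
  omega

theorem add_natCast_inj (hf : LongestCycleMap G f) {s t : ℕ} (hst : s ≤ t) (ht : t < s + c)
    (h : f (i + s) = f (i + t)) : s = t := by
  have hmod : s ≡ t [MOD c] :=
    (ZMod.natCast_eq_natCast_iff s t c).1 (add_left_cancel (hf.injective h))
  by_contra hne
  have := Nat.le_of_dvd (by omega) ((Nat.modEq_iff_dvd' hst).1 hmod)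
  omega

theorem disjoint_arc (hf : LongestCycleMap G f) {a b a' b' : ℕ} (hba : b < a')
    (hb' : b' < a + c) : Disjoint (arc f i a b) (arc f i a' b') := by
  rw [Set.disjoint_left]
  rintro _ ⟨s, ⟨hs₁, hs₂⟩, rfl⟩ ⟨t, ⟨ht₁, ht₂⟩, h⟩
  have := hf.add_natCast_inj (by omega) (by omega) h.symm
  omega

theorem hasPathIn_arc (hf : LongestCycleMap G f) (i : ZMod c) {a b : ℕ} (hab : a ≤ b)
    (hb : b < a + c) : HasPathIn G (arc f i a b) (f (i + a)) (f (i + b)) (b - a) := by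
  induction b, hab using Nat.le_induction with
  | base =>
    have ha : f (i + a) ∈ arc f i a a := ⟨a, ⟨le_rfl, le_rfl⟩, rfl⟩
    exact (HasPathIn.refl ha).mono subset_rfl (by omega)
  | succ b hab ih =>
    have hadj : G.Adj (f (i + (b + 1 : ℕ))) (f (i + b)) := by
      have := (hf.adj (i + b)).symm
      rwa [add_assoc, ← Nat.cast_succ] at this
    have hnotMem : f (i + (b + 1 : ℕ)) ∉ arc f i a b := Set.disjoint_right.1
      (hf.disjoint_arc b.lt_succ_self hb) ⟨b + 1, ⟨le_rfl, le_rfl⟩, rfl⟩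
    refine ((ih (by omega)).symm.cons hnotMem hadj).symm.mono ?_ (by omega)
    rintro v (rfl | ⟨t, ht, rfl⟩)
    · exact ⟨b + 1, ⟨by omega, le_rfl⟩, rfl⟩
    · exact ⟨t, ⟨ht.1, ht.2.trans b.le_succ⟩, rfl⟩

/-- The path and the arc of the cycle avoiding `i + 1, …, i + d - 1` form a cycle. -/
theorem add_two_le (hf : LongestCycleMap G f) {d : ℕ} (hd : 1 ≤ d) (hdc : d < c)
    (hW : ∀ j, f j ∉ W) (hp : HasPathIn G W x y m) (hx : G.Adj (f i) x)
    (hy : G.Adj (f (i + d)) y) : m + 2 ≤ d := by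
  have := hf.length_add_one_le
    (hp.append (hf.hasPathIn_arc i hdc.le (by omega)) hy.symm
    (disjoint_arc_of_forall_notMem hW i d c)) (by omega) (by simpa using hx)
  omega

/-- Follow the first path from `f i` to `f (i + d)`, the cycle backwards to `f (i + r)`, the second
path to `f (i + d + s)`, and the cycle forwards to `f i`. -/
theorem crossing_add_two_le (hf : LongestCycleMap G f) {d r s : ℕ} (hr : 1 ≤ r) (hrd : r ≤ d)
    (hs : 1 ≤ s) (hsd : d + s ≤ c) (hW : ∀ j, f j ∉ W) (hp : HasPathIn G W x y m)
    (hx : G.Adj (f i) x) (hy : G.Adj (f (i + d)) y)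
    (hq : HasPathIn G Q (f (i + r)) (f (i + (d + s : ℕ))) n) (hWQ : Disjoint W Q)
    (hQ : ∀ j, f j ∈ Q → f j = f (i + r) ∨ f j = f (i + (d + s : ℕ))) :
    m + n + 2 ≤ r + s := by
  by_contra hlt
  have hdisj : Disjoint (arc f i r d) (arc f i (d + s) c) := hf.disjoint_arc (by omega) (by omega)
  have hr_mem : f (i + r) ∈ arc f i r d := ⟨r, ⟨le_rfl, hrd⟩, rfl⟩
  have hs_mem : f (i + (d + s : ℕ)) ∈ arc f i (d + s) c := ⟨d + s, ⟨le_rfl, hsd⟩, rfl⟩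
  have hback := (hf.hasPathIn_arc i hrd (by omega)).symm.trans hq fun v ⟨hv, hvQ⟩ => by
    obtain ⟨j, rfl⟩ := arc_subset_range f i r d hv
    exact (hQ j hvQ).resolve_right fun h => Set.disjoint_left.1 hdisj hv (h ▸ hs_mem)
  have hloop := hback.trans (hf.hasPathIn_arc i hsd (by omega)) fun v ⟨hv, hv'⟩ => by
    refine hv.elim (fun h => absurd hv' (Set.disjoint_left.1 hdisj h)) fun hvQ => ?_
    obtain ⟨j, rfl⟩ := arc_subset_range f i (d + s) c hv'
    exact (hQ j hvQ).resolve_left fun h => Set.disjoint_right.1 hdisj hv' (h ▸ hr_mem)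
  have harc := disjoint_arc_of_forall_notMem hW i
  have := hf.length_add_one_le (hp.append hloop hy.symm
    (((harc r d).union_right hWQ).union_right (harc (d + s) c))) (by omega) (by simpa using hx)
  omega

end LongestCycleMap

/-! ## Components outside the cycle and their attachments -/

/-- `H` is the vertex set of a component of `G` minus the cycle `f`. -/
structure OutsideComponent (G : SimpleGraph V) {c : ℕ} (f : ZMod c → V) (H : Finset V) : Prop where
  nonempty : H.Nonempty
  notMem : ∀ i, f i ∉ H
  connected : (G.induce (H : Set V)).Preconnected
  closed : ∀ u ∈ H, ∀ v, G.Adj u v → v ∈ H ∨ ∃ i, f i = v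

theorem exists_outsideComponent [Finite V] {G : SimpleGraph V} {c : ℕ} {f : ZMod c → V} {v₀ : V}
    (hv₀ : ∀ i, f i ≠ v₀) : ∃ H, OutsideComponent G f H := by
  classical
  have := Fintype.ofFinite V
  let IsUnion : Finset V → Prop := fun H => H.Nonempty ∧ (∀ i, f i ∉ H) ∧
    ∀ u ∈ H, ∀ v, G.Adj u v → v ∈ H ∨ ∃ i, f i = v
  have huniv : IsUnion (Finset.univ.filter fun v => ∀ i, f i ≠ v) := by
    refine ⟨⟨v₀, by simpa using hv₀⟩, by simp, fun u _ v _ => ?_⟩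
    simpa using (em (∃ i, f i = v)).symm
  obtain ⟨H, hH, hmin⟩ := (Finset.univ.filter IsUnion).exists_min_image Finset.card
    ⟨_, Finset.mem_filter.2 ⟨Finset.mem_univ _, huniv⟩⟩
  obtain ⟨hne, hout, hcl⟩ := (Finset.mem_filter.1 hH).2
  refine ⟨H, hne, hout, preconnected_induce_iff_exists_adj.2 fun A hA hAne => ?_, hcl⟩
  lift A to Finset V using H.finite_toSet.subset hA.subset
  rw [Finset.coe_ssubset] at hA
  by_contra! hno
  refine (Finset.card_lt_card hA).not_ge (hmin A (Finset.mem_filter.2 ⟨Finset.mem_univ _,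
    Finset.coe_nonempty.1 hAne, fun i hi => hout i (hA.subset hi), fun u hu v huv => ?_⟩))
  refine (hcl u (hA.subset hu) v huv).imp_left fun hv => ?_
  by_contra hvA
  exact hno u hu v ⟨hv, hvA⟩ huv

theorem OutsideComponent.notMem_image [DecidableEq V] {G : SimpleGraph V} {c : ℕ} {f : ZMod c → V}
    {H : Finset V} (hH : OutsideComponent G f H) {x : V} (hx : x ∈ H) (N : Finset (ZMod c)) :
    x ∉ N.image f := fun h => by
  obtain ⟨i, -, rfl⟩ := Finset.mem_image.1 h
  exact hH.notMem i hx

theorem LongestCycleMap.add_two_le_cyclicGap {G : SimpleGraph V} {c : ℕ} [NeZero c]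
    {f : ZMod c → V} (hf : LongestCycleMap G f) {W : Set V} (hW : ∀ j, f j ∉ W)
    {M : Finset (ZMod c)} (hM : 2 ≤ M.card) {i : ZMod c} (hi : i ∈ M) {x y : V} {m : ℕ}
    (hp : HasPathIn G W x y m) (hx : G.Adj (f i) x) (hy : G.Adj (f (cyclicNext M i)) y) :
    m + 2 ≤ cyclicGap M i :=
  hf.add_two_le (one_le_cyclicGap hi) (cyclicGap_lt hM) hW hp hx hy

section Attachments

variable {G : SimpleGraph V} [DecidableRel G.Adj] {c : ℕ} [NeZero c] {f : ZMod c → V}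

/-- The positions on the cycle `f` of the neighbours of `X`. -/
def attachments (G : SimpleGraph V) [DecidableRel G.Adj] (f : ZMod c → V) (X : Finset V) :
    Finset (ZMod c) :=
  Finset.univ.filter fun i => ∃ x ∈ X, G.Adj (f i) x

theorem mem_attachments {X : Finset V} {i : ZMod c} :
    i ∈ attachments G f X ↔ ∃ x ∈ X, G.Adj (f i) x := by
  simp [attachments]

theorem attachments_mono {X Y : Finset V} (h : X ⊆ Y) :
    attachments G f X ⊆ attachments G f Y := fun i hi => by
  obtain ⟨x, hx, hix⟩ := mem_attachments.1 hi
  exact mem_attachments.2 ⟨x, h hx, hix⟩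

namespace OutsideComponent

variable {H : Finset V}

theorem degree_le [Fintype V] (hH : OutsideComponent G f H) {x : V} (hx : x ∈ H) :
    G.degree x ≤ degIn G H x + (attachments G f {x}).card := by
  classical
  have hsub : G.neighborFinset x ⊆
      (H.filter fun v => G.Adj x v) ∪ (attachments G f {x}).image f := fun v hv => by
    have hv := (G.mem_neighborFinset x v).1 hv
    rcases hH.closed x hx v hv with h | ⟨i, rfl⟩
    · exact Finset.mem_union_left _ (Finset.mem_filter.2 ⟨h, hv⟩)
    · refine Finset.mem_union_right _ (Finset.mem_image_of_mem _ (mem_attachments.2 ?_))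
      exact ⟨x, Finset.mem_singleton_self x, hv.symm⟩
  rw [← G.card_neighborFinset_eq_degree x]
  exact (Finset.card_le_card hsub).trans ((Finset.card_union_le _ _).trans
    (Nat.add_le_add_left Finset.card_image_le _))

theorem minDegree_le [Fintype V] (hH : OutsideComponent G f H) {x : V} {X : Finset V}
    (hx : x ∈ H) (hxX : x ∈ X) : G.minDegree ≤ degIn G H x + (attachments G f X).card :=
  (G.minDegree_le_degree x).trans <| (hH.degree_le hx).trans <| Nat.add_le_add_left
    (Finset.card_le_card (attachments_mono (Finset.singleton_subset_iff.2 hxX))) _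

theorem add_one_notMem (hH : OutsideComponent G f H) (hf : LongestCycleMap G f) {i : ZMod c}
    (hi : i ∈ attachments G f H) : i + 1 ∉ attachments G f H := by
  intro h
  obtain ⟨x, hx, hix⟩ := mem_attachments.1 hi
  obtain ⟨y, hy, hiy⟩ := mem_attachments.1 h
  have := hf.add_two_le (i := i) (d := 1) le_rfl (by have := hf.three_le; omega)
    hH.notMem (hasPathIn_of_preconnected hH.connected hx hy) hix (by simpa using hiy)
  omega

theorem two_le_cyclicGap (hH : OutsideComponent G f H) (hf : LongestCycleMap G f)
    {M : Finset (ZMod c)} (hM : M ⊆ attachments G f H) {i : ZMod c} (hi : i ∈ M) :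
    2 ≤ cyclicGap M i := by
  refine (one_le_cyclicGap hi).lt_of_ne fun h => hH.add_one_notMem hf (hM hi) (hM ?_)
  have := cyclicNext_mem hi
  rwa [cyclicNext, ← h, Nat.cast_one] at this

theorem add_two_le_cyclicGap_of_mem_transitions (hH : OutsideComponent G f H)
    (hf : LongestCycleMap G f) {X₁ X₂ : Finset V} {L : ℕ}
    (hp : ∀ x ∈ X₁, ∀ y ∈ X₂, HasPathIn G H x y L)
    (hM : 2 ≤ (attachments G f X₁ ∪ attachments G f X₂).card) {i : ZMod c}
    (hi : i ∈ transitions (attachments G f X₁) (attachments G f X₂)) :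
    L + 2 ≤ cyclicGap (attachments G f X₁ ∪ attachments G f X₂) i := by
  obtain ⟨hi, ⟨h₁, h₂⟩ | ⟨h₁, h₂⟩⟩ := Finset.mem_filter.1 hi
  all_goals
    obtain ⟨x, hx, hix⟩ := mem_attachments.1 h₁
    obtain ⟨y, hy, hiy⟩ := mem_attachments.1 h₂
  · exact hf.add_two_le_cyclicGap hH.notMem hM hi (hp x hx y hy) hix hiy
  · exact hf.add_two_le_cyclicGap hH.notMem hM hi (hp y hy x hx).symm hix hiy

theorem sum_add_two_mul_card_le (hH : OutsideComponent G f H) (hf : LongestCycleMap G f)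
    {M : Finset (ZMod c)} (hM : M ⊆ attachments G f H) (w : ZMod c → ℕ)
    (hw : ∀ i ∈ M, w i = 0 ∨ w i + 2 ≤ cyclicGap M i) : ∑ i ∈ M, w i + 2 * M.card ≤ c :=
  calc ∑ i ∈ M, w i + 2 * M.card = ∑ i ∈ M, (w i + 2) := by
        rw [Finset.sum_add_distrib, Finset.sum_const, smul_eq_mul, mul_comm]
    _ ≤ ∑ i ∈ M, cyclicGap M i := Finset.sum_le_sum fun i hi => by
        have := hH.two_le_cyclicGap hf hM hi
        have := hw i hi
        omega
    _ ≤ c := sum_cyclicGap_le M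

theorem four_le_card_attachments [Fintype V] (hH : OutsideComponent G f H)
    (hf : LongestCycleMap G f) (h4 : KConnected G 4) : 4 ≤ (attachments G f H).card := by
  classical
  by_contra hlt
  have hmem : ∀ j, f j ∈ (attachments G f H).image f → j ∈ attachments G f H := fun j hj =>
    (hf.injective.mem_finset_image).1 hj
  obtain ⟨j, hj⟩ : ∃ j, j ∉ attachments G f H := by
    by_contra! hall
    exact hH.add_one_notMem hf (hall 0) (hall _)
  obtain ⟨w, hw⟩ := hH.nonempty
  obtain ⟨u, hu, -, v, hv, hvS, huv⟩ := h4.exists_adj (S := (attachments G f H).image f)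
    (X := H) (Finset.card_image_le.trans_lt (by omega)) hw (hH.notMem_image hw _)
    (hH.notMem j) fun h => hj (hmem j h)
  rcases hH.closed u hu v huv with h | ⟨i, rfl⟩
  · exact hv h
  · exact hvS (Finset.mem_image_of_mem _ (mem_attachments.2 ⟨u, hu, huv.symm⟩))

theorem three_le_card_attachments_of_isLobe [Fintype V] (hH : OutsideComponent G f H)
    (h4 : KConnected G 4) {X : Finset V} {b y : V} (hX : IsLobe G H b X) (hy : y ∈ H)
    (hyX : y ∉ X) (hyb : y ≠ b) : 3 ≤ (attachments G f X).card := by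
  classical
  by_contra hlt
  have hnotMem : ∀ v ∈ H, v ≠ b → v ∉ insert b ((attachments G f X).image f) := fun v hv hvb =>
    Finset.mem_insert.not.2 (not_or_intro hvb (hH.notMem_image hv _))
  have hcard : (insert b ((attachments G f X).image f)).card < 4 :=
    (Finset.card_insert_le _ _).trans_lt (Nat.add_lt_of_lt_sub
      (Finset.card_image_le.trans_lt (by omega)))
  obtain ⟨w, hw⟩ := hX.nonempty
  obtain ⟨u, hu, -, v, hv, hvS, huv⟩ := h4.exists_adj (X := X) hcard hw
    (hnotMem w (hX.subset hw) (ne_of_mem_of_not_mem hw hX.notMem)) hyX (hnotMem y hy hyb)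
  rw [Finset.mem_insert, not_or] at hvS
  rcases hH.closed u (hX.subset hu) v huv with h | ⟨i, rfl⟩
  · exact (hX.closed u hu v h huv).elim hv hvS.1
  · exact hvS.2 (Finset.mem_image_of_mem _ (mem_attachments.2 ⟨u, hu, huv.symm⟩))

theorem two_mul_add_card_add_card_le (hH : OutsideComponent G f H) (hf : LongestCycleMap G f)
    {X₁ X₂ : Finset V} (hX₁ : X₁ ⊆ H) (hX₂ : X₂ ⊆ H) {L : ℕ} (hL : 2 ≤ L)
    (hp : ∀ x ∈ X₁, ∀ y ∈ X₂, HasPathIn G H x y L) (hN₁ : 2 ≤ (attachments G f X₁).card)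
    (hN₂ : (attachments G f X₂).Nonempty) :
    2 * (L + (attachments G f X₁).card + (attachments G f X₂).card) ≤ c + 4 := by
  set N₁ := attachments G f X₁
  set N₂ := attachments G f X₂
  have hM : 2 ≤ (N₁ ∪ N₂).card := hN₁.trans (Finset.card_le_card Finset.subset_union_left)
  have hT : 2 ≤ (transitions N₁ N₂).card :=
    two_le_card_transitions (Finset.card_pos.1 (by omega)) hN₂ hM
  have hTM := card_add_card_le_transitions N₁ N₂
  have hsum : (transitions N₁ N₂).card * L + 2 * (N₁ ∪ N₂).card ≤ c := by
    have := hH.sum_add_two_mul_card_le hf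
      (Finset.union_subset (attachments_mono hX₁) (attachments_mono hX₂))
      (fun i => if i ∈ transitions N₁ N₂ then L else 0) fun i _ => by
        by_cases hi : i ∈ transitions N₁ N₂
        · rw [if_pos hi]
          exact .inr (hH.add_two_le_cyclicGap_of_mem_transitions hf hp hM hi)
        · exact .inl (if_neg hi)
    rwa [Finset.sum_ite_mem, Finset.inter_eq_right.2 (transitions_subset _ _), Finset.sum_const,
      smul_eq_mul] at this
  nlinarith [Nat.mul_le_mul (Nat.sub_le_sub_right hT 2) (Nat.sub_le_sub_right hL 2)]

theorem four_mul_minDegree_le_of_isLobe [Fintype V] [DecidableEq V]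
    (hH : OutsideComponent G f H) (hf : LongestCycleMap G f) (h4 : KConnected G 4) {b : V}
    {A : Finset V} (hA : IsLobe G H b A) (hA' : IsLobe G H b (H.erase b \ A)) :
    4 * G.minDegree ≤ c + 4 := by
  obtain ⟨X₁, hXA₁, b₁, hb₁, x₁, hx₁, hX₁, hp₁⟩ := hA.exists_long_paths hH.connected
  obtain ⟨X₂, hXA₂, b₂, hb₂, x₂, hx₂, hX₂, hp₂⟩ := hA'.exists_long_paths hH.connected
  have hxH₁ := hX₁.subset hx₁
  have hxH₂ := hX₂.subset hx₂
  have hxb₁ : b ≠ x₁ := fun h => hA.notMem (hXA₁ (h ▸ hx₁))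
  have hxb₂ : b ≠ x₂ := fun h => hA'.notMem (hXA₂ (h ▸ hx₂))
  have hxA₂ : x₂ ∉ A := (Finset.mem_sdiff.1 (hXA₂ hx₂)).2
  have hN₁ : 3 ≤ (attachments G f X₁).card := hH.three_le_card_attachments_of_isLobe h4 hX₁ hxH₂
    (fun h => hxA₂ (hXA₁ h)) fun h => (Finset.mem_insert.1 (h ▸ hb₁)).elim hxb₂.symm hxA₂
  have hN₂ : 3 ≤ (attachments G f X₂).card := by
    have hxA₁ : x₁ ∉ H.erase b \ A := fun h => (Finset.mem_sdiff.1 h).2 (hXA₁ hx₁)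
    exact hH.three_le_card_attachments_of_isLobe h4 hX₂ hxH₁ (fun h => hxA₁ (hXA₂ h))
      fun h => (Finset.mem_insert.1 (h ▸ hb₂)).elim hxb₁.symm hxA₁
  have hpath : ∀ x ∈ X₁, ∀ y ∈ X₂, HasPathIn G H x y (degIn G H x₁ + degIn G H x₂) := by
    intro x hx y hy
    refine ((hp₁ x hx).trans (hp₂ y hy).symm fun v hv => ?_).mono ?_ le_rfl
    · simp only [Set.mem_inter_iff, Finset.mem_coe, Finset.mem_insert, Finset.mem_sdiff] at hv
      rw [Set.mem_singleton_iff]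
      tauto
    · exact Set.union_subset (Finset.insert_subset hA.mem hA.subset)
        (Finset.insert_subset hA'.mem hA'.subset)
  have hd₁ := one_le_degIn hH.connected hxH₁ hA.mem hxb₁
  have hd₂ := one_le_degIn hH.connected hxH₂ hA.mem hxb₂
  have := hH.two_mul_add_card_add_card_le hf hX₁.subset hX₂.subset (by omega) hpath (by omega)
    (Finset.card_pos.1 (by omega))
  have := hH.minDegree_le hxH₁ hx₁
  have := hH.minDegree_le hxH₂ hx₂
  omega

end OutsideComponent

end Attachments

/-! ## Components without a cut vertex -/

theorem NoCutVertex.two_le_degIn {G : SimpleGraph V} [DecidableRel G.Adj] {W : Finset V}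
    (hW : NoCutVertex G W) (hcard : 3 ≤ W.card) {x : V} (hx : x ∈ W) : 2 ≤ degIn G W x := by
  classical
  have exists_ne : ∀ b ∈ W, b ≠ x → ∃ v ∈ W, v ≠ b ∧ G.Adj x v := fun b hb hbx => by
    obtain ⟨z, hz, hzx⟩ := Finset.exists_mem_ne (s := W.erase b)
      (by rw [Finset.card_erase_of_mem hb]; omega) x
    have hWb : (G.induce (W.erase b : Set V)).Preconnected := by
      rw [Finset.coe_erase]; exact hW b hb
    obtain ⟨v, hv⟩ := Finset.card_pos.1
      (one_le_degIn hWb (Finset.mem_erase.2 ⟨hbx.symm, hx⟩) hz hzx)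
    rw [Finset.mem_filter, Finset.mem_erase] at hv
    exact ⟨v, hv.1.2, hv.1.1, hv.2⟩
  obtain ⟨z, hz, hzx⟩ := Finset.exists_mem_ne (s := W) (by omega) x
  obtain ⟨u, hu, -, hxu⟩ := exists_ne z hz hzx
  obtain ⟨v, hv, hvu, hxv⟩ := exists_ne u hu hxu.ne'
  exact Finset.one_lt_card.2 ⟨u, Finset.mem_filter.2 ⟨hu, hxu⟩, v, Finset.mem_filter.2 ⟨hv, hxv⟩,
    hvu.symm⟩

theorem card_image_le_max_of_cyclicNext {α : Type*} [DecidableEq α] {c : ℕ} [NeZero c]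
    {M B : Finset (ZMod c)} {s : ZMod c → α}
    (hs : ∀ i ∈ M, i ∉ B → s (cyclicNext M i) = s i) : (M.image s).card ≤ max 1 B.card := by
  by_cases hsub : M.image s ⊆ B.image s
  · exact (Finset.card_le_card hsub).trans (Finset.card_image_le.trans (le_max_right _ _))
  obtain ⟨v, hv, hvB⟩ := Finset.not_subset.1 hsub
  obtain ⟨i, hi, rfl⟩ := Finset.mem_image.1 hv
  have hall : M.filter (fun j => s j = s i) = M := by
    refine eq_of_cyclicNext_mem (Finset.filter_subset _ _)
      ⟨i, Finset.mem_filter.2 ⟨hi, rfl⟩⟩ fun j hj => ?_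
    obtain ⟨hj, hji⟩ := Finset.mem_filter.1 hj
    have hjB : j ∉ B := fun h => hvB (hji ▸ Finset.mem_image_of_mem s h)
    exact Finset.mem_filter.2 ⟨cyclicNext_mem hj, (hs j hj hjB).trans hji⟩
  refine (Finset.card_le_one.2 fun a ha b hb => ?_).trans (le_max_left _ _)
  rw [← hall] at ha hb
  obtain ⟨j, hj, rfl⟩ := Finset.mem_image.1 ha
  obtain ⟨k, hk, rfl⟩ := Finset.mem_image.1 hb
  rw [(Finset.mem_filter.1 hj).2, (Finset.mem_filter.1 hk).2]

section Spreads

variable {G : SimpleGraph V} [DecidableRel G.Adj] {c : ℕ} [NeZero c] {f : ZMod c → V}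
  {H : Finset V}

/-- The attachments of `H` whose vertex and the vertex of the next attachment have distinct
neighbours in `H`. -/
noncomputable def spreads (G : SimpleGraph V) [DecidableRel G.Adj] (f : ZMod c → V)
    (H : Finset V) : Finset (ZMod c) :=
  open Classical in (attachments G f H).filter fun i => ∃ x ∈ H, ∃ y ∈ H, x ≠ y ∧
    G.Adj (f i) x ∧ G.Adj (f (cyclicNext (attachments G f H) i)) y

theorem mem_spreads {i : ZMod c} : i ∈ spreads G f H ↔ i ∈ attachments G f H ∧
    ∃ x ∈ H, ∃ y ∈ H, x ≠ y ∧
      G.Adj (f i) x ∧ G.Adj (f (cyclicNext (attachments G f H) i)) y := by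
  simp [spreads]

theorem spreads_subset : spreads G f H ⊆ attachments G f H := fun _ hi => (mem_spreads.1 hi).1

-- `s i` is the unique neighbour of `f i` in `H` if there is one, and `f i` otherwise: the range of
-- `s` covers all edges between `H` and the cycle, and `s` changes only at `spreads G f H`.
theorem exists_edge_representatives (G : SimpleGraph V) [DecidableRel G.Adj] (f : ZMod c → V)
    (H : Finset V) : ∃ s : ZMod c → V,
      (∀ i, (s i ∈ H ∧ ∀ u ∈ H, G.Adj (f i) u → u = s i) ∨ s i = f i) ∧
      ∀ i ∈ attachments G f H, i ∉ spreads G f H → s (cyclicNext (attachments G f H) i) = s i := by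
  have hex : ∀ i, ∃ v, (v ∈ H ∧ ∀ u ∈ H, G.Adj (f i) u → u = v) ∨
      (v = f i ∧ ¬ ∃! u, u ∈ H ∧ G.Adj (f i) u) := fun i => by
    by_cases h : ∃! u, u ∈ H ∧ G.Adj (f i) u
    · obtain ⟨v, hv, huniq⟩ := h
      exact ⟨v, .inl ⟨hv.1, fun u hu hiu => huniq u ⟨hu, hiu⟩⟩⟩
    · exact ⟨f i, .inr ⟨rfl, h⟩⟩
  choose s hs using hex
  refine ⟨s, fun i => (hs i).imp_right And.left, fun i hi hiS => ?_⟩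
  have heq : ∀ x ∈ H, ∀ y ∈ H, G.Adj (f i) x →
      G.Adj (f (cyclicNext (attachments G f H) i)) y → x = y := by
    intro x hx y hy hix hiy
    by_contra hxy
    exact hiS (mem_spreads.2 ⟨hi, x, hx, y, hy, hxy, hix, hiy⟩)
  obtain ⟨x, hx, hix⟩ := mem_attachments.1 hi
  obtain ⟨y, hy, hiy⟩ := mem_attachments.1 (cyclicNext_mem hi)
  obtain rfl := heq x hx y hy hix hiy
  have h₁ := (hs i).resolve_right fun h =>
    h.2 ⟨x, ⟨hx, hix⟩, fun z hz => heq z hz.1 x hx hz.2 hiy⟩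
  have h₂ := (hs (cyclicNext (attachments G f H) i)).resolve_right fun h =>
    h.2 ⟨x, ⟨hx, hiy⟩, fun z hz => (heq x hx z hz.1 hix hz.2).symm⟩
  rw [← h₁.2 x hx hix, ← h₂.2 x hx hiy]

theorem attachments_singleton_union_erase [DecidableEq V] {y : V} (hy : y ∈ H) :
    attachments G f {y} ∪ attachments G f (H.erase y) = attachments G f H := by
  ext i
  rw [← Finset.insert_erase hy]
  simp only [Finset.mem_union, mem_attachments, Finset.mem_singleton, exists_eq_left,
    Finset.mem_insert, exists_eq_or_imp, Finset.erase_insert (Finset.notMem_erase y H)]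

theorem two_le_card_transitions_singleton_erase [DecidableEq V]
    (hM : 2 ≤ (attachments G f H).card) (hS : (spreads G f H).Nonempty) {y : V} (hy : y ∈ H)
    (hNy : (attachments G f {y}).Nonempty) :
    2 ≤ (transitions (attachments G f {y}) (attachments G f (H.erase y))).card := by
  refine two_le_card_transitions hNy ?_ (by rwa [attachments_singleton_union_erase hy])
  obtain ⟨i, hi⟩ := hS
  obtain ⟨-, x, hx, z, hz, hxz, hix, hiz⟩ := mem_spreads.1 hi
  by_cases hxy : x = y
  · exact ⟨_, mem_attachments.2 ⟨z, Finset.mem_erase.2 ⟨hxy ▸ hxz.symm, hz⟩, hiz⟩⟩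
  · exact ⟨_, mem_attachments.2 ⟨x, Finset.mem_erase.2 ⟨hxy, hx⟩, hix⟩⟩

theorem two_mul_add_add_le {p r t d : ℕ} (hp : 2 ≤ p) (hpr : p ≤ r) (ht : 2 ≤ t)
    (htd : 4 ≤ t + d) : 2 * (p + r + t) ≤ t * r + d * p + 8 := by
  obtain ⟨r, rfl⟩ := Nat.exists_eq_add_of_le hpr
  obtain ⟨p, rfl⟩ := Nat.exists_eq_add_of_le hp
  obtain h | h := le_total 4 t
  · obtain ⟨t, rfl⟩ := Nat.exists_eq_add_of_le h
    nlinarith [Nat.zero_le (t * (p + r)), Nat.zero_le (d * (2 + p))]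
  · nlinarith [Nat.mul_le_mul_right (2 + p) (show 4 - t ≤ d by omega),
      Nat.sub_add_cancel h, Nat.mul_le_mul_right r ht]

namespace OutsideComponent

theorem min_le_card_spreads [Fintype V] (hH : OutsideComponent G f H) (hf : LongestCycleMap G f)
    (h4 : KConnected G 4) (hcard : 2 ≤ H.card) : min 4 H.card ≤ (spreads G f H).card := by
  classical
  by_contra! hlt
  obtain ⟨s, hs, hstep⟩ := exists_edge_representatives G f H
  set M := attachments G f H
  have hScard := card_image_le_max_of_cyclicNext hstep
  obtain ⟨w, hw, hwS⟩ : ∃ w ∈ H, w ∉ M.image s :=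
    Finset.exists_mem_notMem_of_card_lt_card (by omega)
  obtain ⟨j, hjM⟩ : ∃ j, j ∉ M := by
    by_contra! hall
    exact hH.add_one_notMem hf (hall 0) (hall _)
  have hjS : f j ∉ M.image s := fun h => by
    obtain ⟨i, hi, hij⟩ := Finset.mem_image.1 h
    obtain h | h := hs i
    · exact hH.notMem j (hij ▸ h.1)
    · exact hjM (hf.injective (h.symm.trans hij) ▸ hi)
  obtain ⟨u, hu, huS, v, hv, hvS, huv⟩ :=
    h4.exists_adj (X := H) (by omega) hw hwS (hH.notMem j) hjS
  obtain h | ⟨i, rfl⟩ := hH.closed u hu v huv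
  · exact hv h
  have hi := Finset.mem_image_of_mem s (mem_attachments.2 ⟨u, hu, huv.symm⟩)
  obtain h | h := hs i
  · exact huS (h.2 u hu huv.symm ▸ hi)
  · exact hvS (h ▸ hi)

theorem card_transitions_mul_add_le [DecidableEq V] (hH : OutsideComponent G f H)
    (hf : LongestCycleMap G f) (hM : 2 ≤ (attachments G f H).card) {y : V} (hy : y ∈ H)
    {p r : ℕ} (hp : ∀ x ∈ H, ∀ z ∈ H, x ≠ z → HasPathIn G H x z p)
    (hr : ∀ z ∈ H, z ≠ y → HasPathIn G H y z r) {T : Finset (ZMod c)}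
    (hT : T = transitions (attachments G f {y}) (attachments G f (H.erase y))) :
    T.card * r + (spreads G f H \ T).card * p + 2 * (attachments G f H).card ≤ c := by
  have hunion := attachments_singleton_union_erase (G := G) (f := f) hy
  have hgapT : ∀ i ∈ T, r + 2 ≤ cyclicGap (attachments G f H) i := fun i hi => by
    rw [← hunion]
    refine hH.add_two_le_cyclicGap_of_mem_transitions hf (fun x hx z hz => ?_)
      (by rwa [hunion]) (hT ▸ hi)
    obtain rfl := Finset.mem_singleton.1 hx
    obtain ⟨hzx, hz⟩ := Finset.mem_erase.1 hz
    exact hr z hz hzx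
  have hgapS : ∀ i ∈ spreads G f H, p + 2 ≤ cyclicGap (attachments G f H) i := fun i hi => by
    obtain ⟨hi, x, hx, z, hz, hxz, hix, hiz⟩ := mem_spreads.1 hi
    exact hf.add_two_le_cyclicGap hH.notMem hM hi (hp x hx z hz hxz) hix hiz
  have hTsub : T ⊆ attachments G f H := hT ▸ hunion ▸ transitions_subset _ _
  have hSsub : spreads G f H \ T ⊆ attachments G f H := Finset.sdiff_subset.trans spreads_subset
  have hsum := hH.sum_add_two_mul_card_le hf subset_rfl
    (fun i => (if i ∈ T then r else 0) + if i ∈ spreads G f H \ T then p else 0) fun i _ => by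
      by_cases hiT : i ∈ T
      · simp only [hiT, if_true, Finset.mem_sdiff, not_true, and_false, if_false, add_zero]
        exact .inr (hgapT i hiT)
      · by_cases hiS : i ∈ spreads G f H
        · simp only [hiT, hiS, if_false, Finset.mem_sdiff, not_false_eq_true, and_true, if_true,
            zero_add]
          exact .inr (hgapS i hiS)
        · simp [hiT, hiS]
  rwa [Finset.sum_add_distrib, Finset.sum_ite_mem, Finset.sum_ite_mem,
    Finset.inter_eq_right.2 hTsub, Finset.inter_eq_right.2 hSsub, Finset.sum_const,
    Finset.sum_const, smul_eq_mul, smul_eq_mul] at hsum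

theorem four_mul_minDegree_le_of_noCutVertex [Fintype V] (hH : OutsideComponent G f H)
    (hf : LongestCycleMap G f) (h4 : KConnected G 4) (hcard : 3 ≤ H.card)
    (hcut : NoCutVertex G H) : 4 * G.minDegree ≤ c + 8 := by
  classical
  obtain ⟨y, hy, hymin⟩ := H.exists_min_image (degIn G H) hH.nonempty
  obtain ⟨y', hy', hymin'⟩ := (H.erase y).exists_min_image (degIn G H)
    (Finset.card_pos.1 (by rw [Finset.card_erase_of_mem hy]; omega))
  have hy'H := (Finset.mem_erase.1 hy').2
  have hp := hcut.two_le_degIn hcard hy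
  have hpr := hymin y' hy'H
  have hr := degIn_lt_card (G := G) hy'H
  have hδ := hH.minDegree_le hy (Finset.mem_singleton_self y)
  have hδ' := hH.minDegree_le hy'H hy'
  have hM := hH.four_le_card_attachments hf h4
  have hS := hH.min_le_card_spreads hf h4 (by omega)
  have hTM := card_add_card_le_transitions (attachments G f {y}) (attachments G f (H.erase y))
  rw [attachments_singleton_union_erase hy] at hTM
  have hT := two_le_card_transitions_singleton_erase (G := G) (f := f) (by omega)
    (Finset.card_pos.1 (by omega)) hy
  set T := transitions (attachments G f {y}) (attachments G f (H.erase y)) with hTdef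
  have hsum := hH.card_transitions_mul_add_le hf (by omega) hy (p := degIn G H y)
    (r := degIn G H y') (fun x hx z hz hxz => by
      obtain ⟨x₀, hx₀, -, -, h⟩ := hcut.exists_long_path hcard hx hz hxz
      exact h.mono subset_rfl (hymin x₀ hx₀))
    (fun z hz hzy => by
      obtain ⟨x₀, hx₀, hne, -, h⟩ := hcut.exists_long_path hcard hy hz hzy.symm
      exact h.mono subset_rfl (hymin' x₀ (Finset.mem_erase.2 ⟨hne, hx₀⟩))) hTdef
  have hST := Finset.le_card_sdiff T (spreads G f H)
  obtain h | h := Nat.lt_or_ge H.card 4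
  · obtain ⟨hp, hr⟩ : degIn G H y = 2 ∧ degIn G H y' = 2 := by omega
    rw [hp, hr] at hsum
    omega
  obtain hNy | hNy := (attachments G f {y}).eq_empty_or_nonempty
  · rw [hNy, Finset.card_empty] at hδ
    nlinarith [Nat.mul_le_mul_left T.card hpr, Nat.mul_le_mul_right (degIn G H y)
      (show 4 ≤ T.card + (spreads G f H \ T).card by omega)]
  · have := two_mul_add_add_le (d := (spreads G f H \ T).card) hp hpr (hT hNy) (by omega)
    omega

end OutsideComponent

end Spreads

/-! ## Successors of attachments -/

theorem card_le_indepNumber [Fintype V] {G : SimpleGraph V} {s : Finset V}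
    (hs : G.IsIndepSet s) : s.card ≤ indepNumber G := by
  refine le_csSup ⟨Fintype.card V, ?_⟩ ⟨s, fun u hu v hv huv => hs hu hv huv.ne huv, rfl⟩
  rintro _ ⟨t, -, rfl⟩
  exact t.card_le_univ

theorem isIndepSet_insert {G : SimpleGraph V} {s : Set V} {v : V} (hs : G.IsIndepSet s)
    (hv : ∀ u ∈ s, ¬ G.Adj v u) : G.IsIndepSet (insert v s) :=
  Set.pairwise_insert.2 ⟨hs, fun u hu _ => ⟨hv u hu, fun h => hv u hu h.symm⟩⟩

theorem LongestCycleMap.add_three_le_of_adj {G : SimpleGraph V} {c : ℕ} {f : ZMod c → V}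
    (hf : LongestCycleMap G f) {W : Set V} (hW : ∀ j, f j ∉ W) {i : ZMod c} {d r s m : ℕ}
    {x y : V} (hr : 1 ≤ r) (hrd : r ≤ d) (hs : 1 ≤ s) (hsd : d + s ≤ c)
    (hp : HasPathIn G W x y m) (hx : G.Adj (f i) x) (hy : G.Adj (f (i + d)) y)
    (hadj : G.Adj (f (i + r)) (f (i + (d + s : ℕ)))) : m + 3 ≤ r + s :=
  hf.crossing_add_two_le hr hrd hs hsd hW hp hx hy (.of_adj hadj)
    (Set.disjoint_right.2 (by rintro v (rfl | rfl) <;> exact hW _))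
    fun j hj => by simpa using hj

theorem LongestCycleMap.not_adj_add_one {G : SimpleGraph V} {c : ℕ} {f : ZMod c → V}
    (hf : LongestCycleMap G f) {W : Set V} (hW : ∀ j, f j ∉ W) {i j : ZMod c} (hij : i ≠ j)
    {x y : V} {m : ℕ} (hp : HasPathIn G W x y m) (hx : G.Adj (f i) x) (hy : G.Adj (f j) y) :
    ¬ G.Adj (f (i + 1)) (f (j + 1)) := by
  intro h
  have := hf.neZero
  obtain ⟨d, hd, hdc, rfl⟩ := exists_eq_add_natCast_of_ne hij
  have := hf.add_three_le_of_adj hW le_rfl hd le_rfl hdc hp hx hy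
    (by simpa [add_assoc] using h)
  omega

theorem LongestCycleMap.card_image_add_one [DecidableEq V] {G : SimpleGraph V} {c : ℕ}
    {f : ZMod c → V} (hf : LongestCycleMap G f) (N : Finset (ZMod c)) :
    (N.image fun i => f (i + 1)).card = N.card :=
  Finset.card_image_of_injective _ (hf.injective.comp (add_left_injective 1))

theorem OutsideComponent.card_attachments_lt_indepNumber [Fintype V] {G : SimpleGraph V}
    [DecidableRel G.Adj] {c : ℕ} [NeZero c] {f : ZMod c → V} {H : Finset V}
    (hH : OutsideComponent G f H) (hf : LongestCycleMap G f) :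
    (attachments G f H).card < indepNumber G := by
  classical
  obtain ⟨x, hx⟩ := hH.nonempty
  set s := (attachments G f H).image fun i => f (i + 1) with hs
  have hindep : G.IsIndepSet s := by
    rw [hs, Finset.coe_image]
    rintro _ ⟨i, hi, rfl⟩ _ ⟨j, hj, rfl⟩ hij
    obtain ⟨y, hy, hiy⟩ := mem_attachments.1 hi
    obtain ⟨z, hz, hjz⟩ := mem_attachments.1 hj
    exact hf.not_adj_add_one hH.notMem (ne_of_apply_ne (fun i => f (i + 1)) hij)
      (hasPathIn_of_preconnected hH.connected hy hz) hiy hjz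
  have hxs : ∀ u ∈ (s : Set V), ¬ G.Adj x u := by
    rw [hs, Finset.coe_image]
    rintro _ ⟨i, hi, rfl⟩ hadj
    exact hH.add_one_notMem hf hi (mem_attachments.2 ⟨x, hx, hadj.symm⟩)
  have hle := card_le_indepNumber (s := insert x s)
    (by rw [Finset.coe_insert]; exact isIndepSet_insert hindep hxs)
  have hxs' : x ∉ s := fun h => by
    obtain ⟨i, -, rfl⟩ := Finset.mem_image.1 h
    exact hH.notMem _ hx
  rwa [Finset.card_insert_of_notMem hxs', hs, hf.card_image_add_one] at hle

/-! ## Components consisting of an edge -/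

/-- The edge `x y` is a component outside the longest cycle `f` and both its ends are attached to
the cycle at exactly the positions in `M`. -/
structure TwinComponent (G : SimpleGraph V) {c : ℕ} (f : ZMod c → V) (M : Finset (ZMod c))
    (x y : V) : Prop where
  longest : LongestCycleMap G f
  adj : G.Adj x y
  ne_left : ∀ i, f i ≠ x
  ne_right : ∀ i, f i ≠ y
  adj_left : ∀ i, G.Adj (f i) x ↔ i ∈ M
  adj_right : ∀ i, G.Adj (f i) y ↔ i ∈ M
  closed : ∀ v, G.Adj x v → v = y ∨ ∃ i, f i = v

namespace TwinComponent

variable {G : SimpleGraph V} {c : ℕ} {f : ZMod c → V} {M : Finset (ZMod c)} {x y : V}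
  {i j : ZMod c}

theorem reverse (h : TwinComponent G f M x y) :
    TwinComponent G (fun i => f (-i)) (M.map (Equiv.neg _).toEmbedding) x y := by
  refine ⟨h.longest.reverse, h.adj, fun i => h.ne_left _, fun i => h.ne_right _, fun i => ?_,
    fun i => ?_, fun v hv => (h.closed v hv).imp_right fun ⟨i, hi⟩ => ⟨-i, by simpa using hi⟩⟩
  · rw [h.adj_left, Finset.mem_map_equiv]; rfl
  · rw [h.adj_right, Finset.mem_map_equiv]; rfl

theorem neg_mem_map_neg (hi : i ∈ M) : -i ∈ M.map (Equiv.neg (ZMod c)).toEmbedding :=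
  Finset.mem_map_of_mem (Equiv.neg (ZMod c)).toEmbedding hi

theorem notMem_pair (h : TwinComponent G f M x y) (i : ZMod c) : f i ∉ ({x, y} : Set V) := by
  simp [h.ne_left, h.ne_right]

theorem three_le (h : TwinComponent G f M x y) {d : ℕ} (hd : 1 ≤ d) (hdc : d < c)
    (hi : i ∈ M) (hj : i + d ∈ M) : 3 ≤ d :=
  h.longest.add_two_le hd hdc h.notMem_pair (.of_adj h.adj) ((h.adj_left i).2 hi)
    ((h.adj_right _).2 hj)

theorem add_one_notMem (h : TwinComponent G f M x y) (hi : i ∈ M) : i + 1 ∉ M := fun hj => by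
  have := h.three_le (d := 1) le_rfl (by have := h.longest.three_le; omega) hi (by simpa using hj)
  omega

theorem add_two_notMem (h : TwinComponent G f M x y) (hi : i ∈ M) : i + 2 ∉ M := fun hj => by
  have := h.three_le (d := 2) (by omega) (by have := h.longest.three_le; omega) hi
    (by simpa using hj)
  omega

theorem not_adj_add_one (h : TwinComponent G f M x y) (hi : i ∈ M) (hj : j ∈ M) :
    ¬ G.Adj (f (i + 1)) (f (j + 1)) := by
  obtain rfl | hij := eq_or_ne i j
  · exact G.irrefl
  · exact h.longest.not_adj_add_one h.notMem_pair hij (.of_adj h.adj) ((h.adj_left i).2 hi)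
      ((h.adj_right j).2 hj)

theorem not_adj_add_two (h : TwinComponent G f M x y) (hi : i ∈ M) (hj : j ∈ M) (hij : i ≠ j) :
    ¬ G.Adj (f (i + 1)) (f (j + 2)) := by
  intro hadj
  have := h.longest.neZero
  obtain ⟨d, hd, hdc, rfl⟩ := exists_eq_add_natCast_of_ne hij
  have hdc₂ : d + 2 ≤ c := by
    by_contra hlt
    refine h.add_one_notMem hj ?_
    have hzero : ((d + 1 : ℕ) : ZMod c) = 0 := by rw [show d + 1 = c by omega, ZMod.natCast_self]
    rwa [add_assoc, ← Nat.cast_add_one, hzero, add_zero]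
  have := h.longest.add_three_le_of_adj h.notMem_pair le_rfl hd one_le_two hdc₂ (.of_adj h.adj)
    ((h.adj_left i).2 hi) ((h.adj_right _).2 hj) (by simpa [add_assoc] using hadj)
  omega

theorem not_adj_sub_two (h : TwinComponent G f M x y) (hi : i ∈ M) (hj : j ∈ M) (hij : i ≠ j) :
    ¬ G.Adj (f (i - 1)) (f (j - 2)) := by
  have := h.reverse.not_adj_add_two (neg_mem_map_neg hi) (neg_mem_map_neg hj)
    (neg_injective.ne hij)
  simpa [sub_eq_add_neg, add_comm] using this

theorem three_mul_card_le (h : TwinComponent G f M x y) : 3 * M.card ≤ c := by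
  have := h.longest.neZero
  have := sum_le_of_forall_add_notMem M (fun _ => 3) fun i hi t ht hlt => by
    interval_cases t
    · simpa using h.add_one_notMem hi
    · simpa using h.add_two_notMem hi
  rwa [Finset.sum_const, smul_eq_mul, mul_comm] at this

theorem four_mul_card_le_add_card_segments (h : TwinComponent G f M x y) :
    4 * M.card ≤ c + (M.filter fun i => i + 3 ∈ M).card := by
  have := h.longest.neZero
  have := sum_le_of_forall_add_notMem M (fun i => if i + 3 ∈ M then 3 else 4)
    fun i hi t ht hlt => by
      have : t < 4 := hlt.trans_le (by split_ifs <;> omega)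
      interval_cases t
      · simpa using h.add_one_notMem hi
      · simpa using h.add_two_notMem hi
      · intro h₃
        rw [if_pos (by simpa using h₃)] at hlt
        omega
  rw [Finset.sum_ite, Finset.sum_const, Finset.sum_const, smul_eq_mul, smul_eq_mul] at this
  have := Finset.card_filter_add_card_filter_not (s := M) (fun i => i + 3 ∈ M)
  omega

theorem not_adj_left_add_one (h : TwinComponent G f M x y) (hi : i ∈ M) :
    ¬ G.Adj x (f (i + 1)) := fun hadj =>
  h.add_one_notMem hi ((h.adj_left _).1 hadj.symm)

theorem isIndepSet_successors (h : TwinComponent G f M x y) :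
    G.IsIndepSet ((fun i => f (i + 1)) '' M) := by
  rintro _ ⟨i, hi, rfl⟩ _ ⟨j, hj, rfl⟩ -
  exact h.not_adj_add_one hi hj

theorem card_add_two_le_indepNumber [Fintype V] (h : TwinComponent G f M x y) {z : V}
    (hz : ∀ i, f i ≠ z) (hzx : z ≠ x) (hxz : ¬ G.Adj x z)
    (hsucc : ∀ i ∈ M, ¬ G.Adj z (f (i + 1))) : M.card + 2 ≤ indepNumber G := by
  classical
  have hle := card_le_indepNumber (G := G)
    (s := insert x (insert z (M.image fun i => f (i + 1)))) (by
      push_cast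
      refine isIndepSet_insert (isIndepSet_insert h.isIndepSet_successors ?_) ?_
      · exact Set.forall_mem_image.2 hsucc
      · exact Set.forall_mem_insert.2 ⟨hxz, Set.forall_mem_image.2 fun i hi =>
          h.not_adj_left_add_one hi⟩)
  rwa [Finset.card_insert_of_notMem (by simp [h.ne_left, hzx.symm]),
    Finset.card_insert_of_notMem (by simp [hz]), h.longest.card_image_add_one] at hle

theorem not_adj_add_one_of_adj (h : TwinComponent G f M x y) {z : V} (hz : ∀ i, f i ≠ z)
    (hzx : z ≠ x) (hi : i ∈ M) (hiz : G.Adj (f (i + 1)) z) (hj : j ∈ M) (hij : i ≠ j) :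
    ¬ G.Adj z (f (j + 1)) := by
  intro hzj
  have := h.longest.neZero
  obtain ⟨d, hd, hdc, rfl⟩ := exists_eq_add_natCast_of_ne hij
  have hpath : HasPathIn G (insert (f (i + (1 : ℕ))) {z, f (i + (d + 1 : ℕ))})
      (f (i + (1 : ℕ))) (f (i + (d + 1 : ℕ))) 2 := by
    refine (HasPathIn.of_adj (by simpa [add_assoc] using hzj)).cons ?_ (by simpa using hiz)
    rintro (e | e)
    · exact hz _ e
    · have := h.longest.add_natCast_inj (by omega) (by omega) e
      omega
  have := h.longest.crossing_add_two_le (W := {x}) le_rfl hd le_rfl hdc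
    (fun j => h.ne_left j) (.refl (Set.mem_singleton x)) ((h.adj_left i).2 hi)
    ((h.adj_left _).2 hj) hpath
    (by simp [hzx.symm, (h.ne_left _).symm])
    fun j hj => by simpa [hz] using hj
  omega

theorem card_add_two_le_indepNumber_of_adj [Fintype V] (h : TwinComponent G f M x y) {z : V}
    (hz : ∀ i, f i ≠ z) (hzx : z ≠ x) (hxz : ¬ G.Adj x z) (hi : i ∈ M)
    (hiz : G.Adj (f (i + 1)) z) : M.card + 2 ≤ indepNumber G := by
  classical
  have hz₂ : ¬ G.Adj z (f (i + 2)) := fun hadj => by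
    have := h.longest.add_two_le (W := {z}) (i := i + 1) (d := 1) le_rfl
      (by have := h.longest.three_le; omega) (fun j => hz j) (.refl (Set.mem_singleton z)) hiz
      (by rw [add_assoc, Nat.cast_one, one_add_one_eq_two]; exact hadj.symm)
    omega
  have hx₂ : ¬ G.Adj x (f (i + 2)) := fun hadj =>
    h.add_two_notMem hi ((h.adj_left _).1 hadj.symm)
  have hle := card_le_indepNumber (G := G)
    (s := insert x (insert z (insert (f (i + 2)) ((M.erase i).image fun i => f (i + 1))))) (by
      push_cast
      refine isIndepSet_insert (isIndepSet_insert (isIndepSet_insert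
        (h.isIndepSet_successors.mono (Set.image_mono Set.sdiff_subset)) ?_) ?_) ?_
      · refine Set.forall_mem_image.2 fun j hj hadj => ?_
        exact h.not_adj_add_two hj.1 hi hj.2 hadj.symm
      · exact Set.forall_mem_insert.2 ⟨hz₂, Set.forall_mem_image.2 fun j hj =>
          h.not_adj_add_one_of_adj hz hzx hi hiz hj.1 (Ne.symm hj.2)⟩
      · exact Set.forall_mem_insert.2 ⟨hxz, Set.forall_mem_insert.2 ⟨hx₂,
          Set.forall_mem_image.2 fun j hj => h.not_adj_left_add_one hj.1⟩⟩)
  have hi₂ : f (i + 2) ∉ (M.erase i).image fun i => f (i + 1) := fun hmem => by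
    obtain ⟨j, hj, e⟩ := Finset.mem_image.1 hmem
    have hji : i + 1 = j := add_right_cancel (b := 1) (by rw [h.longest.injective e]; ring)
    exact h.add_one_notMem hi (hji ▸ Finset.mem_of_mem_erase hj)
  rw [Finset.card_insert_of_notMem (by simp [h.ne_left, (h.ne_left _).symm, hzx.symm]),
    Finset.card_insert_of_notMem (by simp [hz, (hz _).symm]), Finset.card_insert_of_notMem hi₂,
    h.longest.card_image_add_one, Finset.card_erase_of_mem hi] at hle
  have := Finset.card_pos.2 ⟨i, hi⟩
  omega

theorem mem_range_of_ne [Fintype V] (h : TwinComponent G f M x y)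
    (hα : indepNumber G ≤ M.card + 1) {z : V} (hzx : z ≠ x) (hzy : z ≠ y) : z ∈ Set.range f := by
  by_contra hzf
  have hz : ∀ i, f i ≠ z := not_exists.1 hzf
  have hxz : ¬ G.Adj x z := fun hadj => (h.closed z hadj).elim hzy hzf
  by_cases hsucc : ∃ i ∈ M, G.Adj (f (i + 1)) z
  · obtain ⟨i, hi, hiz⟩ := hsucc
    have := h.card_add_two_le_indepNumber_of_adj hz hzx hxz hi hiz
    omega
  · have := h.card_add_two_le_indepNumber hz hzx hxz fun i hi hadj => hsucc ⟨i, hi, hadj.symm⟩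
    omega

end TwinComponent

/-! ## Vertex separations -/

/-- The set `S` separates the nonempty sets `A` and `B`: no edge joins `A` to `B`, and every vertex
outside `S` lies in one of them. -/
structure VertexSeparation (G : SimpleGraph V) (S A B : Finset V) : Prop where
  left_nonempty : A.Nonempty
  right_nonempty : B.Nonempty
  cover : ∀ v, v ∈ S ∨ v ∈ A ∨ v ∈ B
  not_adj : ∀ a ∈ A, ∀ b ∈ B, ¬ G.Adj a b

theorem VertexSeparation.symm {G : SimpleGraph V} {S A B : Finset V}
    (h : VertexSeparation G S A B) : VertexSeparation G S B A :=
  ⟨h.right_nonempty, h.left_nonempty, fun v => (h.cover v).imp_right Or.symm,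
    fun a ha b hb hab => h.not_adj b hb a ha hab.symm⟩

theorem VertexSeparation.neighborFinset_subset [Fintype V] [DecidableEq V] {G : SimpleGraph V}
    [DecidableRel G.Adj] {S A B : Finset V} (h : VertexSeparation G S A B) {b : V} (hb : b ∈ B) :
    G.neighborFinset b ⊆ B ∪ S := by
  intro v hv
  rw [mem_neighborFinset] at hv
  rw [Finset.mem_union]
  rcases h.cover v with hS | hA | hB
  · exact .inr hS
  · exact absurd hv.symm (h.not_adj v hA b hb)
  · exact .inl hB

theorem VertexSeparation.inter_neighborFinset_subset [Fintype V] [DecidableEq V]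
    {G : SimpleGraph V} [DecidableRel G.Adj] {S A B : Finset V} (h : VertexSeparation G S A B)
    {a b : V} (ha : a ∈ A) (hb : b ∈ B) : G.neighborFinset a ∩ G.neighborFinset b ⊆ S := by
  intro v hv
  rw [Finset.mem_inter, mem_neighborFinset, mem_neighborFinset] at hv
  rcases h.cover v with hS | hA | hB
  · exact hS
  · exact absurd hv.2.symm (h.not_adj v hA b hb)
  · exact absurd hv.1 (h.not_adj a ha v hB)

theorem KConnected.le_connectivity [Fintype V] {G : SimpleGraph V} {k : ℕ}
    (h : KConnected G k) : k ≤ connectivity G :=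
  le_csSup ⟨Fintype.card V, fun _ hm => hm.1.le⟩ h

theorem exists_vertexSeparation_of_not_kConnected [Fintype V] {G : SimpleGraph V} {k : ℕ}
    (hk : k < Fintype.card V) (h : ¬ KConnected G k) :
    ∃ S A B, S.card < k ∧ VertexSeparation G S A B := by
  classical
  obtain ⟨S, hS, hcon⟩ : ∃ S : Finset V, S.card < k ∧
      ¬ (G.induce ((↑S : Set V)ᶜ)).Connected := by
    by_contra! hall
    exact h ⟨hk, hall⟩
  obtain ⟨v, -, hv⟩ := Finset.exists_mem_notMem_of_card_lt_card
    (show S.card < (Finset.univ : Finset V).card from hS.trans hk)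
  have : Nonempty ((↑S : Set V)ᶜ : Set V) := ⟨v, by simpa using hv⟩
  have hpre : ¬ ∀ a b, (G.induce ((↑S : Set V)ᶜ)).Reachable a b := fun h => hcon ⟨h⟩
  push Not at hpre
  obtain ⟨a, b, hab⟩ := hpre
  let R : V → Prop := fun v => ∃ hv, (G.induce ((↑S : Set V)ᶜ)).Reachable a ⟨v, hv⟩
  refine ⟨S, Finset.univ.filter R, Finset.univ.filter fun v => v ∉ S ∧ ¬ R v, hS,
    ⟨a, Finset.mem_filter.2 ⟨Finset.mem_univ _, a.2, .refl _⟩⟩, ⟨b, ?_⟩, fun v => ?_,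
    fun u hu v hv huv => ?_⟩
  · exact Finset.mem_filter.2 ⟨Finset.mem_univ _, fun h => b.2 (Finset.mem_coe.2 h),
      fun ⟨_, h⟩ => hab h⟩
  · simp only [Finset.mem_filter, Finset.mem_univ, true_and]
    tauto
  · obtain ⟨hu, hau⟩ := (Finset.mem_filter.1 hu).2
    obtain ⟨hv, hav⟩ := (Finset.mem_filter.1 hv).2
    have hv : v ∈ (↑S : Set V)ᶜ := by simpa using hv
    exact hav ⟨hv, hau.trans (Adj.reachable (G := G.induce _) huv)⟩

theorem exists_vertexSeparation [Fintype V] (G : SimpleGraph V)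
    (h : connectivity G + 1 < Fintype.card V) :
    ∃ S A B, S.card ≤ connectivity G ∧ VertexSeparation G S A B := by
  have hnot : ¬ KConnected G (connectivity G + 1) := fun h =>
    (h.le_connectivity).not_gt (Nat.lt_succ_self _)
  obtain ⟨S, A, B, hS, hsep⟩ := exists_vertexSeparation_of_not_kConnected h hnot
  exact ⟨S, A, B, Nat.lt_succ_iff.1 hS, hsep⟩

namespace TwinComponent

variable {G : SimpleGraph V} {c : ℕ} {f : ZMod c → V} {M : Finset (ZMod c)} {x y : V}
  {i j : ZMod c} {S A B : Finset V}

theorem disjoint_image_add_two (h : TwinComponent G f M x y) :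
    Disjoint (M.image (· + 1)) (M.image (· + 2)) := by
  simp only [Finset.disjoint_left, Finset.mem_image]
  rintro _ ⟨a, ha, rfl⟩ ⟨b, hb, e⟩
  have hba : b + 1 = a := add_right_cancel (b := 1) (by rw [← e]; ring)
  exact h.add_one_notMem hb (hba ▸ ha)

theorem disjoint_image_sub_one (h : TwinComponent G f M x y) :
    Disjoint (M.image (· + 1)) (M.image (· - 1)) := by
  simp only [Finset.disjoint_left, Finset.mem_image]
  rintro _ ⟨a, ha, rfl⟩ ⟨b, hb, e⟩
  have hab : a + 2 = b := by rw [← sub_add_cancel b 1, e]; ring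
  exact h.add_two_notMem ha (hab ▸ hb)

theorem card_image_compl_add [NeZero c] [DecidableEq V] (h : TwinComponent G f M x y)
    {N : Finset (ZMod c)} (hN : Disjoint (M.image (· + 1)) N) :
    ((M.image (· + 1) ∪ N)ᶜ.image f).card + M.card + N.card = c := by
  rw [Finset.card_image_of_injective _ h.longest.injective, add_assoc,
    ← Finset.card_image_of_injective M (add_left_injective 1), ← Finset.card_union_of_disjoint hN,
    Finset.card_compl_add_card, ZMod.card]

theorem exists_segment_notMem (h : TwinComponent G f M x y)
    (hS : S.card < (M.filter fun i => i + 3 ∈ M).card) :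
    ∃ i ∈ M, i + 3 ∈ M ∧ f (i + 1) ∉ S ∧ f (i + 2) ∉ S := by
  classical
  by_contra! hcon
  have hmaps : Set.MapsTo (fun i => if f (i + 1) ∈ S then f (i + 1) else f (i + 2))
      (M.filter fun i => i + 3 ∈ M) S := fun i hi => by
    obtain ⟨hi, hi₃⟩ := Finset.mem_filter.1 hi
    dsimp only
    split_ifs with h₁
    · exact h₁
    · exact hcon i hi hi₃ h₁
  obtain ⟨i, hi, j, hj, hij, e⟩ := Finset.exists_ne_map_eq_of_card_lt_of_maps_to hS hmaps
  have hi := (Finset.mem_filter.1 hi).1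
  have hj := (Finset.mem_filter.1 hj).1
  have hne : ∀ {a b}, a ∈ M → b ∈ M → f (a + 1) ≠ f (b + 2) := fun {a b} ha hb e => by
    have hba : b + 1 = a := add_right_cancel (b := 1) (by rw [h.longest.injective e]; ring)
    exact h.add_one_notMem hb (hba ▸ ha)
  split_ifs at e
  · exact hij (add_right_cancel (h.longest.injective e))
  · exact hne hi hj e
  · exact hne hj hi e.symm
  · exact hij (add_right_cancel (h.longest.injective e))

variable [Fintype V] [DecidableRel G.Adj]

theorem neighborFinset_add_one_subset [NeZero c] [DecidableEq V] (h : TwinComponent G f M x y)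
    (hoff : ∀ z, z ≠ x → z ≠ y → z ∈ Set.range f) (hi : i ∈ M) {N : Finset (ZMod c)}
    (hN : ∀ m ∈ N, ¬ G.Adj (f (i + 1)) (f m)) :
    G.neighborFinset (f (i + 1)) ⊆ (M.image (· + 1) ∪ N)ᶜ.image f := by
  intro v hv
  rw [mem_neighborFinset] at hv
  obtain ⟨m, rfl⟩ := hoff v (by rintro rfl; exact h.add_one_notMem hi ((h.adj_left _).1 hv))
    (by rintro rfl; exact h.add_one_notMem hi ((h.adj_right _).1 hv))
  refine Finset.mem_image_of_mem _ (Finset.mem_compl.2 fun hm => ?_)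
  rcases Finset.mem_union.1 hm with hm | hm
  · obtain ⟨a, ha, rfl⟩ := Finset.mem_image.1 hm
    exact h.not_adj_add_one hi ha hv
  · exact hN m hm hv

theorem add_one_notMem_right (h : TwinComponent G f M x y)
    (hoff : ∀ z, z ≠ x → z ≠ y → z ∈ Set.range f) (hδ : M.card + 1 ≤ G.minDegree)
    (hsep : VertexSeparation G S A B) (hc : c + S.card < 4 * M.card) (hi : i ∈ M) (hj : j ∈ M)
    (hiA : f (i + 1) ∈ A) : f (j + 1) ∉ B := by
  classical
  intro hjB
  have := h.longest.neZero
  let N := ((M.erase i).erase j).image (· + 2)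
  have hN : M.card ≤ N.card + 2 := by
    have h₁ := Finset.pred_card_le_card_erase (s := M) (a := i)
    have h₂ := Finset.pred_card_le_card_erase (s := M.erase i) (a := j)
    rw [Finset.card_image_of_injective _ (add_left_injective 2)]
    omega
  have hsub : ∀ a ∈ M, a = i ∨ a = j →
      G.neighborFinset (f (a + 1)) ⊆ (M.image (· + 1) ∪ N)ᶜ.image f := by
    intro a ha haij
    refine h.neighborFinset_add_one_subset hoff ha (Finset.forall_mem_image.2 fun b hb => ?_)
    simp only [Finset.mem_erase] at hb
    exact h.not_adj_add_two ha hb.2.2 (by rintro rfl; tauto)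
  have hunion := Finset.card_le_card
    (Finset.union_subset (hsub i hi (.inl rfl)) (hsub j hj (.inr rfl)))
  have hinter := Finset.card_le_card (hsep.inter_neighborFinset_subset hiA hjB)
  have hcompl := h.card_image_compl_add (N := N) (h.disjoint_image_add_two.mono_right
    (Finset.image_mono _ ((Finset.erase_subset _ _).trans (Finset.erase_subset _ _))))
  have hcard := Finset.card_union_add_card_inter
    (G.neighborFinset (f (i + 1))) (G.neighborFinset (f (j + 1)))
  rw [card_neighborFinset_eq_degree, card_neighborFinset_eq_degree] at hcard
  have := G.minDegree_le_degree (f (i + 1))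
  have := G.minDegree_le_degree (f (j + 1))
  omega

theorem sub_one_notMem_right (h : TwinComponent G f M x y)
    (hoff : ∀ z, z ≠ x → z ≠ y → z ∈ Set.range f) (hδ : M.card + 1 ≤ G.minDegree)
    (hsep : VertexSeparation G S A B) (hc : c + S.card < 4 * M.card) (hi : i ∈ M) (hj : j ∈ M)
    (hiA : f (i - 1) ∈ A) : f (j - 1) ∉ B := by
  have := h.reverse.add_one_notMem_right
    (fun z hzx hzy => (hoff z hzx hzy).imp' Neg.neg fun m hm => by simpa using hm)
    (by simpa using hδ) hsep (by simpa using hc)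
    (neg_mem_map_neg hi) (neg_mem_map_neg hj)
    (by simpa [sub_eq_add_neg, add_comm] using hiA)
  simpa [sub_eq_add_neg, add_comm] using this

theorem card_filter_mem_add_card_lt [NeZero c] [DecidableEq V] (h : TwinComponent G f M x y)
    (hoff : ∀ z, z ≠ x → z ≠ y → z ∈ Set.range f) (hδ : M.card + 1 ≤ G.minDegree)
    (hsep : VertexSeparation G S A B) (hc : c + S.card < 4 * M.card) (hi : i ∈ M)
    (hi₃ : i + 3 ∈ M) (hiA : f (i + 1) ∈ A) (hiA₂ : f (i + 2) ∈ A) :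
    (Finset.univ.filter fun m => f m ∈ B).card + S.card < M.card := by
  let N := (M.erase (i + 3)).image (· - 1)
  have hN : N.card + 1 = M.card := by
    rw [Finset.card_image_of_injective _ sub_left_injective, Finset.card_erase_add_one hi₃]
  have hnbr : G.neighborFinset (f (i + 1)) ⊆ (M.image (· + 1) ∪ N)ᶜ.image f := by
    refine h.neighborFinset_add_one_subset hoff hi (Finset.forall_mem_image.2 fun b hb hadj => ?_)
    obtain ⟨hbi, hb⟩ := Finset.mem_erase.1 hb
    refine h.not_adj_sub_two hb hi₃ hbi ?_
    rw [show i + 3 - 2 = i + 1 by ring]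
    exact hadj.symm
  have hB : (Finset.univ.filter fun m => f m ∈ B).image f ⊆ (M.image (· + 1) ∪ N)ᶜ.image f := by
    refine Finset.image_mono f fun m hm => Finset.mem_compl.2 fun hmX => ?_
    have hm := (Finset.mem_filter.1 hm).2
    rcases Finset.mem_union.1 hmX with hmX | hmX
    · obtain ⟨b, hb, rfl⟩ := Finset.mem_image.1 hmX
      exact h.add_one_notMem_right hoff hδ hsep hc hi hb hiA hm
    · obtain ⟨b, hb, rfl⟩ := Finset.mem_image.1 hmX
      refine h.sub_one_notMem_right hoff hδ hsep hc hi₃ (Finset.mem_of_mem_erase hb) ?_ hm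
      rwa [show i + 3 - 1 = i + 2 by ring]
  have hdisj : Disjoint (G.neighborFinset (f (i + 1)))
      ((Finset.univ.filter fun m => f m ∈ B).image f) := by
    refine Finset.disjoint_right.2 (Finset.forall_mem_image.2 fun m hm hadj => ?_)
    exact hsep.not_adj _ hiA _ (Finset.mem_filter.1 hm).2 ((mem_neighborFinset _ _ _).1 hadj)
  have hcompl := h.card_image_compl_add (N := N)
    (h.disjoint_image_sub_one.mono_right (Finset.image_mono _ (Finset.erase_subset _ _)))
  have hcard := Finset.card_le_card (Finset.union_subset hnbr hB)
  rw [Finset.card_union_of_disjoint hdisj, card_neighborFinset_eq_degree,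
    Finset.card_image_of_injective _ h.longest.injective] at hcard
  have := G.minDegree_le_degree (f (i + 1))
  omega

theorem le_card_filter_mem_add_card [NeZero c] [DecidableEq V] (h : TwinComponent G f M x y)
    (hoff : ∀ z, z ≠ x → z ≠ y → z ∈ Set.range f) (hδ : M.card + 1 ≤ G.minDegree)
    (hsep : VertexSeparation G S A B) :
    M.card ≤ (Finset.univ.filter fun m => f m ∈ B).card + S.card := by
  set D := (Finset.univ.filter fun m => f m ∈ B).image f
  have hD : D.card = (Finset.univ.filter fun m => f m ∈ B).card :=
    Finset.card_image_of_injective _ h.longest.injective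
  have htwin : ∀ z ∈ B, (∀ m ∈ M, G.Adj (f m) z) → M.card ≤ D.card + S.card := by
    intro z hz hadj
    rw [← Finset.card_image_of_injective M h.longest.injective]
    refine (Finset.card_le_card (Finset.image_subset_iff.2 fun m hm => ?_)).trans
      (Finset.card_union_le D S)
    have := hsep.neighborFinset_subset hz ((mem_neighborFinset _ _ _).2 (hadj m hm).symm)
    exact (Finset.mem_union.1 this).elim
      (fun hB => Finset.mem_union_left _ (Finset.mem_image_of_mem f (by simpa using hB)))
      (Finset.mem_union_right _)
  rw [← hD]
  by_cases hx : x ∈ B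
  · exact htwin x hx fun m hm => (h.adj_left m).2 hm
  by_cases hy : y ∈ B
  · exact htwin y hy fun m hm => (h.adj_right m).2 hm
  have hBD : B ⊆ D := fun v hv => by
    obtain ⟨m, rfl⟩ := hoff v (ne_of_mem_of_not_mem hv hx) (ne_of_mem_of_not_mem hv hy)
    exact Finset.mem_image_of_mem f (by simpa using hv)
  obtain ⟨u, hu⟩ := hsep.right_nonempty
  have hcard := (Finset.card_le_card ((hsep.neighborFinset_subset hu).trans
    (Finset.union_subset_union_left hBD))).trans (Finset.card_union_le D S)
  rw [card_neighborFinset_eq_degree] at hcard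
  have := G.minDegree_le_degree u
  omega

theorem four_mul_card_le_of_vertexSeparation (h : TwinComponent G f M x y)
    (hα : indepNumber G ≤ M.card + 1) (hδ : M.card + 1 ≤ G.minDegree)
    (hsep : VertexSeparation G S A B) : 4 * M.card ≤ c + S.card := by
  classical
  by_contra! hc
  have := h.longest.neZero
  have hoff : ∀ z, z ≠ x → z ≠ y → z ∈ Set.range f := fun z hzx hzy => h.mem_range_of_ne hα hzx hzy
  have hcard := h.four_mul_card_le_add_card_segments
  obtain ⟨i, hi, hi₃, hS₁, hS₂⟩ := h.exists_segment_notMem (S := S) (by omega)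
  have hside : ∀ {A B}, VertexSeparation G S A B → f (i + 1) ∈ A → f (i + 2) ∈ A → False :=
    fun hsep h₁ h₂ => (h.card_filter_mem_add_card_lt hoff hδ hsep hc hi hi₃ h₁ h₂).not_ge
      (h.le_card_filter_mem_add_card hoff hδ hsep)
  have hadj : G.Adj (f (i + 1)) (f (i + 2)) := by
    have := h.longest.adj (i + 1)
    rwa [add_assoc, one_add_one_eq_two] at this
  rcases (hsep.cover _).resolve_left hS₁ with h₁ | h₁ <;>
    rcases (hsep.cover _).resolve_left hS₂ with h₂ | h₂
  · exact hside hsep h₁ h₂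
  · exact hsep.not_adj _ h₁ _ h₂ hadj
  · exact hsep.not_adj _ h₂ _ h₁ hadj.symm
  · exact hside hsep.symm h₁ h₂

end TwinComponent

/-! ## The circumference bound -/

theorem OutsideComponent.exists_twinComponent [Fintype V] {G : SimpleGraph V}
    [DecidableRel G.Adj] {c : ℕ} [NeZero c] {f : ZMod c → V} {H : Finset V}
    (hH : OutsideComponent G f H) (hf : LongestCycleMap G f) (hα : indepNumber G ≤ G.minDegree)
    (hcard : H.card ≤ 2) :
    ∃ M x y, TwinComponent G f M x y ∧ G.minDegree = M.card + 1 := by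
  classical
  set M := attachments G f H
  have hlt : M.card < G.minDegree := (hH.card_attachments_lt_indepNumber hf).trans_le hα
  have hδ : ∀ v ∈ H, G.minDegree ≤ degIn G H v + (attachments G f {v}).card := fun v hv => by
    simpa using hH.minDegree_le hv (Finset.mem_singleton_self v)
  have hdeg : ∀ v ∈ H, degIn G H v < H.card := fun v hv => degIn_lt_card hv
  have hatt : ∀ v ∈ H, attachments G f {v} = M := fun v hv =>
    Finset.eq_of_subset_of_card_le (attachments_mono (Finset.singleton_subset_iff.2 hv))
      (by have := hδ v hv; have := hdeg v hv; omega)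
  obtain ⟨z, hz⟩ := hH.nonempty
  have hδz := hδ z hz
  have hdegz := hdeg z hz
  rw [hatt z hz] at hδz
  obtain ⟨x, y, hxy, rfl⟩ := Finset.card_eq_two.1 (show H.card = 2 by omega)
  have hx : x ∈ ({x, y} : Finset V) := Finset.mem_insert_self x _
  have hy : y ∈ ({x, y} : Finset V) := Finset.mem_insert_of_mem (Finset.mem_singleton_self y)
  have hadj : ∀ v ∈ ({x, y} : Finset V), ∀ i, G.Adj (f i) v ↔ i ∈ M := fun v hv i => by
    rw [← hatt v hv, mem_attachments]
    simp
  have hclosed : ∀ v, G.Adj x v → v = y ∨ ∃ i, f i = v := fun v hv =>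
    (hH.closed x hx v hv).imp_left fun h =>
      Finset.mem_singleton.1 (Finset.mem_of_mem_insert_of_ne h hv.ne')
  obtain ⟨v, hv⟩ := Finset.card_pos.1 (one_le_degIn hH.connected hx hy hxy.symm)
  obtain ⟨hv, hxv⟩ := Finset.mem_filter.1 hv
  obtain rfl := Finset.mem_singleton.1 (Finset.mem_of_mem_insert_of_ne hv hxv.ne')
  refine ⟨M, x, v, ⟨hf, hxv, ?_, ?_, hadj x hx, hadj v hy, hclosed⟩, ?_⟩
  · rintro i rfl
    exact hH.notMem i hx
  · rintro i rfl
    exact hH.notMem i hy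
  · rw [Finset.card_pair hxy] at hdegz
    omega

theorem OutsideComponent.four_mul_minDegree_le [Fintype V] {G : SimpleGraph V}
    [DecidableRel G.Adj] {c : ℕ} [NeZero c] {f : ZMod c → V} {H : Finset V}
    (hH : OutsideComponent G f H) (hf : LongestCycleMap G f) (h4 : KConnected G 4)
    (hα : indepNumber G ≤ G.minDegree) : 4 * G.minDegree ≤ c + connectivity G + 4 := by
  classical
  have hκ := h4.le_connectivity
  by_cases hcut : NoCutVertex G H
  swap
  · obtain ⟨b, hb, hb'⟩ : ∃ b ∈ H, ¬ (G.induce (↑H \ {b} : Set V)).Preconnected := by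
      simpa [NoCutVertex] using hcut
    obtain ⟨A, hA, hA'⟩ := exists_isLobe hb hb'
    have := hH.four_mul_minDegree_le_of_isLobe hf h4 hA hA'
    omega
  obtain hcard | hcard := le_or_gt 3 H.card
  · have := hH.four_mul_minDegree_le_of_noCutVertex hf h4 hcard hcut
    omega
  obtain ⟨M, x, y, htwin, hδ⟩ := hH.exists_twinComponent hf hα (Nat.lt_succ_iff.1 hcard)
  obtain hn | hn := lt_or_ge (connectivity G + 1) (Fintype.card V)
  · obtain ⟨S, A, B, hS, hsep⟩ := exists_vertexSeparation G hn
    have := htwin.four_mul_card_le_of_vertexSeparation (hα.trans hδ.le) hδ.ge hsep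
    omega
  · have := htwin.three_mul_card_le
    have hcn := Fintype.card_le_of_injective f hf.injective
    rw [ZMod.card] at hcn
    omega

theorem KConnected.preconnected [Fintype V] {G : SimpleGraph V} {k : ℕ} (h : KConnected G (k + 1)) :
    G.Preconnected := fun u v => by
  by_contra huv
  obtain ⟨a, ha, -, b, hb, -, hab⟩ := h.exists_adj (S := ∅) (X := {w | G.Reachable u w})
    (by simp) (Reachable.refl u) (by simp) huv (by simp)
  exact hb (ha.trans hab.reachable)

theorem KConnected.exists_isCycle [Fintype V] {G : SimpleGraph V} {k : ℕ}
    (h : KConnected G (k + 2)) : ∃ (v : V) (w : G.Walk v v), w.IsCycle := by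
  classical
  have hcard := h.1
  have : Nontrivial V := Fintype.one_lt_card_iff_nontrivial.1 (by omega)
  by_contra! hcon
  have htree : G.IsTree := ⟨⟨h.preconnected⟩, fun v w => hcon v w⟩
  obtain ⟨v, hv⟩ := G.exists_minimal_degree_vertex
  rw [htree.minDegree_eq_one_of_nontrivial, eq_comm, degree_eq_one_iff_existsUnique_adj] at hv
  obtain ⟨w, hvw, hw⟩ := hv
  obtain ⟨z, -, hz⟩ := Finset.exists_mem_notMem_of_card_lt_card
    (show ({v, w} : Finset V).card < (Finset.univ : Finset V).card from
      Finset.card_le_two.trans_lt (by rw [Finset.card_univ]; omega))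
  rw [Finset.mem_insert, Finset.mem_singleton, not_or] at hz
  obtain ⟨a, rfl, -, b, -, hb, hab⟩ := h.exists_adj (S := {w}) (X := {v}) (by simp) rfl
    (by simpa using hvw.ne) hz.1 (by simpa using hz.2)
  exact hb (Finset.mem_singleton.2 (hw b hab))

theorem longestCycleMap_getVert {G : SimpleGraph V} {v : V} {w : G.Walk v v} (hw : w.IsCycle)
    (hlongest : ∀ u (w' : G.Walk u u), w'.IsCycle → w'.length ≤ w.length) :
    LongestCycleMap G fun i : ZMod w.length => w.getVert i.val := by
  have h3 := hw.three_le_length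
  have : NeZero w.length := ⟨by omega⟩
  have : Fact (1 < w.length) := ⟨by omega⟩
  refine ⟨h3, fun i j hij => ?_, fun i => ?_, hlongest⟩
  · have hi := i.val_lt
    have hj := j.val_lt
    exact ZMod.val_injective _ (hw.getVert_injOn' (by simp; omega) (by simp; omega) hij)
  · have hadj := w.adj_getVert_succ i.val_lt
    have hval : (i + 1).val = (i.val + 1) % w.length := by rw [ZMod.val_add, ZMod.val_one]
    obtain e | e := (Nat.succ_le_iff.2 i.val_lt).eq_or_lt
    · rw [← Nat.succ_eq_add_one, e, Walk.getVert_length] at hadj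
      rwa [hval, ← Nat.succ_eq_add_one, e, Nat.mod_self, Walk.getVert_zero]
    · rwa [hval, Nat.mod_eq_of_lt e]

theorem exists_longestCycleMap [Fintype V] {G : SimpleGraph V}
    (h : ∃ (v : V) (w : G.Walk v v), w.IsCycle) :
    ∃ f : ZMod (circumference G) → V, LongestCycleMap G f := by
  have hbdd : BddAbove {n | ∃ (v : V) (w : G.Walk v v), w.IsCycle ∧ w.length = n} := by
    refine ⟨Fintype.card V, ?_⟩
    rintro _ ⟨v, w, hw, rfl⟩
    simpa using hw.support_nodup.length_le_card
  obtain ⟨v, w, hw⟩ := h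
  obtain ⟨v, w, hw, hlen⟩ : ∃ (v : V) (w : G.Walk v v), w.IsCycle ∧ w.length = circumference G :=
    Nat.sSup_mem (by exact ⟨_, v, w, hw, rfl⟩) hbdd
  have hlongest : ∀ u (w' : G.Walk u u), w'.IsCycle → w'.length ≤ w.length := fun u w' hw' =>
    hlen ▸ le_csSup hbdd ⟨u, w', hw', rfl⟩
  rw [← hlen]
  exact ⟨_, longestCycleMap_getVert hw hlongest⟩

theorem nikoghosyan_2011_circumference (G : SimpleGraph V) [Fintype V] [DecidableRel G.Adj]
    (h4 : KConnected G 4)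
    (hα : indepNumber G ≤ G.minDegree) :
    (circumference G : ℤ) ≥
      min (Fintype.card V : ℤ) (4 * G.minDegree - connectivity G - 4) := by
  obtain ⟨f, hf⟩ := exists_longestCycleMap h4.exists_isCycle
  have := hf.neZero
  by_cases hsurj : Function.Surjective f
  · have hn := Fintype.card_le_of_surjective f hsurj
    rw [ZMod.card] at hn
    exact (min_le_left _ _).trans (by exact_mod_cast hn)
  · obtain ⟨v₀, hv₀⟩ := not_forall.1 hsurj
    obtain ⟨H, hH⟩ := exists_outsideComponent (G := G) (not_exists.1 hv₀)
    have hbound := hH.four_mul_minDegree_le hf h4 hα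
    exact (min_le_right _ _).trans (by omega)
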